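/- arXiv:2110.01838 — 5 statements merged into one kernel-verified Lean document; each statement's English description precedes it below -/
import Mathlib

section
/- For every integer n ≥ 3, the weak Roman domination number of the flower snark J_n equals ⌈(3n+1)/2⌉. -/
/-- Vertices of the flower snark `J_n`: a copy index `i : Fin n` together with
one of the four vertices of the copy: `0 = a`, `1 = b`, `2 = c`, `3 = d`. -/
abbrev FV (n : ℕ) := Fin n × Fin 4

/-- The flower snark `J_n`: in each copy, `a^i` is adjacent to `b^i, c^i, d^i`;
the `b` vertices form an `n`-cycle; the `c` and `d` vertices form a `2n`-cycle
via the paths `c^i c^{i+1}`, `d^i d^{i+1}` (for `1 ≤ i ≤ n-1`) together with the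
twist edges `c^n d^1` and `d^n c^1`. -/
def flowerSnark (n : ℕ) : SimpleGraph (FV n) :=
  SimpleGraph.fromRel (fun v w =>
    (v.1 = w.1 ∧ v.2 = 0 ∧ w.2 ≠ 0) ∨
    (((v.1 : ℕ) + 1) % n = (w.1 : ℕ) ∧ v.2 = 1 ∧ w.2 = 1) ∨
    ((v.1 : ℕ) + 1 = (w.1 : ℕ) ∧ v.2 = 2 ∧ w.2 = 2) ∨
    ((v.1 : ℕ) + 1 = (w.1 : ℕ) ∧ v.2 = 3 ∧ w.2 = 3) ∨
    ((v.1 : ℕ) = n - 1 ∧ (w.1 : ℕ) = 0 ∧ v.2 = 2 ∧ w.2 = 3) ∨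
    ((v.1 : ℕ) = n - 1 ∧ (w.1 : ℕ) = 0 ∧ v.2 = 3 ∧ w.2 = 2))

/-- `S` is a dominating set of `J_n`. -/
def Dominating (n : ℕ) (S : Set (FV n)) : Prop :=
  ∀ v ∉ S, ∃ w ∈ S, (flowerSnark n).Adj v w

/-- `S` is a minimal dominating set of `J_n`. -/
def MinimalDominating (n : ℕ) (S : Set (FV n)) : Prop :=
  Dominating n S ∧ ∀ T : Set (FV n), T ⊂ S → ¬ Dominating n T

/-- `S` is an independent set of `J_n`. -/
def IndependentSet (n : ℕ) (S : Set (FV n)) : Prop :=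
  ∀ v ∈ S, ∀ w ∈ S, ¬ (flowerSnark n).Adj v w

/-- `S` is a 2-dominating set of `J_n`: every vertex outside `S` has at least
two neighbours in `S`. -/
def TwoDominating (n : ℕ) (S : Set (FV n)) : Prop :=
  ∀ v ∉ S, ∃ w₁ ∈ S, ∃ w₂ ∈ S, w₁ ≠ w₂ ∧
    (flowerSnark n).Adj v w₁ ∧ (flowerSnark n).Adj v w₂

/-- `S` is a total dominating set of `J_n`. -/
def TotalDominating (n : ℕ) (S : Set (FV n)) : Prop :=
  ∀ v : FV n, ∃ w ∈ S, (flowerSnark n).Adj v w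

/-- `S` is a connected dominating set of `J_n`. -/
def ConnectedDominating (n : ℕ) (S : Set (FV n)) : Prop :=
  Dominating n S ∧ ((flowerSnark n).induce S).Connected

/-- `S` is a secure dominating set of `J_n`. -/
def SecureDominating (n : ℕ) (S : Set (FV n)) : Prop :=
  Dominating n S ∧ ∀ v ∉ S, ∃ w ∈ S,
    (flowerSnark n).Adj v w ∧ Dominating n (insert v (S \ {w}))

/-- `v` is undefended with respect to `f`: neither `v` nor any of its
neighbours carries a guard. -/
def Undefended (n : ℕ) (f : FV n → ℕ) (v : FV n) : Prop :=
  f v = 0 ∧ ∀ w, (flowerSnark n).Adj v w → f w = 0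

/-- `f` is a weak Roman dominating function on `J_n`: `f` takes values in
`{0,1,2}`, has no undefended vertex, and every vertex `v` with `f v = 0` has a
neighbour `w` with `f w ≥ 1` such that moving one guard from `w` to `v` leaves
no undefended vertex. -/
def WeakRomanDominating (n : ℕ) (f : FV n → ℕ) : Prop :=
  (∀ v, f v ≤ 2) ∧ (∀ v, ¬ Undefended n f v) ∧
  ∀ v, f v = 0 → ∃ w, (flowerSnark n).Adj v w ∧ 1 ≤ f w ∧
    ∀ u, ¬ Undefended n
      (fun x => if x = v then 1 else if x = w then f w - 1 else f x) u

/-- The domination number of `J_n`. -/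
noncomputable def dominationNumber (n : ℕ) : ℕ :=
  sInf {k | ∃ S : Set (FV n), Dominating n S ∧ S.ncard = k}

/-- The independent domination number of `J_n`. -/
noncomputable def indepDominationNumber (n : ℕ) : ℕ :=
  sInf {k | ∃ S : Set (FV n), Dominating n S ∧ IndependentSet n S ∧ S.ncard = k}

/-- The upper domination number of `J_n`: the maximum cardinality of a minimal
dominating set. -/
noncomputable def upperDominationNumber (n : ℕ) : ℕ :=
  sSup {k | ∃ S : Set (FV n), MinimalDominating n S ∧ S.ncard = k}

/-- The 2-domination number of `J_n`. -/
noncomputable def twoDominationNumber (n : ℕ) : ℕ :=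
  sInf {k | ∃ S : Set (FV n), TwoDominating n S ∧ S.ncard = k}

/-- The total domination number of `J_n`. -/
noncomputable def totalDominationNumber (n : ℕ) : ℕ :=
  sInf {k | ∃ S : Set (FV n), TotalDominating n S ∧ S.ncard = k}

/-- The connected domination number of `J_n`. -/
noncomputable def connectedDominationNumber (n : ℕ) : ℕ :=
  sInf {k | ∃ S : Set (FV n), ConnectedDominating n S ∧ S.ncard = k}

/-- The secure domination number of `J_n`. -/
noncomputable def secureDominationNumber (n : ℕ) : ℕ :=
  sInf {k | ∃ S : Set (FV n), SecureDominating n S ∧ S.ncard = k}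

/-- The weak Roman domination number of `J_n`. -/
noncomputable def weakRomanDominationNumber (n : ℕ) : ℕ :=
  sInf {k | ∃ f : FV n → ℕ, WeakRomanDominating n f ∧ ∑ v, f v = k}

/-- The weight of the copy `J^(m mod n)` in a vertex set `S`, i.e. the number
of vertices of `S` among `a, b, c, d` of that copy. -/
noncomputable def copyWeight {n : ℕ} (S : Set (FV n)) (m : ℕ) : ℕ :=
  (S ∩ {v : FV n | (v.1 : ℕ) = m % n}).ncard

/-- The weight of the copy `J^(m mod n)` in a function `f`, i.e.
`f a + f b + f c + f d` over that copy. -/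
def fCopyWeight {n : ℕ} (f : FV n → ℕ) (m : ℕ) : ℕ :=
  ∑ v ∈ Finset.univ.filter (fun v : FV n => (v.1 : ℕ) = m % n), f v

/-!
Unroll `J_n` to the infinite strip covering it. A guard who is alone in its column cannot leave
along its row, since the hub of the column would become undefended; hence neighbouring columns of
weight `1` put strong constraints on each other, and no consecutive column weights are `1, 1, 1`,
`1, 1, 2, 1` or `1, 2, 1, 1`. By discharging, the average column weight is then at least `3 / 2`.
If it equals `3 / 2`, the weights are `1, 2, 1, 2, …`, which is impossible already within seven
columns, or `1, 1, 2, 2, …`. In the latter case the guards of the columns of weight `1` keep to the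
same two distinct rows all along the strip, so these rows are both closed up by going once around
`J_n`, whereas the twist leaves only the row `b` closed.
-/

namespace FlowerSnark

/-- The guard function after one guard has moved from `w` to an unguarded vertex `v`. -/
def moveGuard {n : ℕ} (f : FV n → ℕ) (w v : FV n) : FV n → ℕ :=
  fun x => if x = v then 1 else if x = w then f w - 1 else f x

/-- A guard on `w` can defend its neighbour `v`: moving it to `v` leaves every neighbour of `w`
defended. The other vertices need no check, as their closed neighbourhoods lose no guard. -/
def Defends {n : ℕ} (f : FV n → ℕ) (w v : FV n) : Prop :=
  (flowerSnark n).Adj v w ∧ 1 ≤ f w ∧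
    ∀ u, (flowerSnark n).Adj w u → ∃ x, (x = u ∨ (flowerSnark n).Adj u x) ∧ 1 ≤ moveGuard f w v x

section Defends

variable {n : ℕ} {f : FV n → ℕ} {u v w : FV n}

theorem not_undefended_iff : ¬ Undefended n f u ↔
    ∃ x, (x = u ∨ (flowerSnark n).Adj u x) ∧ 1 ≤ f x := by
  simp only [Undefended, not_and_or, not_forall, Nat.one_le_iff_ne_zero, or_and_right, exists_or,
    exists_eq_left, exists_prop]

theorem one_le_moveGuard_iff :
    1 ≤ moveGuard f w v u ↔ u = v ∨ (u = w ∧ 2 ≤ f w) ∨ (u ≠ w ∧ 1 ≤ f u) := by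
  unfold moveGuard
  split_ifs <;> grind

theorem Defends.not_undefended_moveGuard (h : Defends f w v) (hu : ¬ Undefended n f u) :
    ¬ Undefended n (moveGuard f w v) u := by
  obtain ⟨hadj, -, hdef⟩ := h
  rw [not_undefended_iff] at hu ⊢
  obtain ⟨x, hx, hfx⟩ := hu
  by_cases hxw : x = w
  · rcases hx with rfl | hux
    · exact ⟨v, Or.inr (hxw ▸ hadj.symm), by simp [moveGuard]⟩
    · exact hdef u (hxw ▸ hux.symm)
  · exact ⟨x, hx, one_le_moveGuard_iff.2 (Or.inr (Or.inr ⟨hxw, hfx⟩))⟩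

theorem weakRomanDominating_iff : WeakRomanDominating n f ↔
    (∀ v, f v ≤ 2) ∧ ∀ v, f v = 0 → ∃ w, Defends f w v := by
  refine and_congr_right fun _ => ⟨fun ⟨_, h⟩ v hv => ?_, fun h => ?_⟩
  · obtain ⟨w, hadj, hw, hdef⟩ := h v hv
    exact ⟨w, hadj, hw, fun u _ => not_undefended_iff.1 (hdef u)⟩
  · have hdom : ∀ v, ¬ Undefended n f v := fun v hv => by
      obtain ⟨w, hadj, hw, -⟩ := h v hv.1
      exact absurd (hv.2 w hadj) (by omega)
    refine ⟨hdom, fun v hv => ?_⟩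
    obtain ⟨w, hw⟩ := h v hv
    exact ⟨w, hw.1, hw.2.1, fun u => hw.not_undefended_moveGuard (hdom u)⟩

end Defends

/-! ### The covering strip -/

section Cover

variable {n : ℕ}

theorem adj_hub_iff_base (i : Fin n) (y : FV n) :
    (flowerSnark n).Adj (i, 0) y ↔ ∃ x ≠ 0, y = (i, x) := by
  obtain ⟨j, z⟩ := y
  rw [flowerSnark, SimpleGraph.fromRel_adj]
  simp only [ne_eq, Prod.mk.injEq, not_and, true_and, zero_ne_one, false_and, and_false,
    Fin.reduceEq, or_self, or_false, not_true_eq_false, exists_eq_right_right']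
  grind

variable [NeZero n]

/-- The twist of the flower snark, as a permutation of the four vertices of a copy. -/
def twist : Equiv.Perm (Fin 4) := Equiv.swap 2 3

/-- The covering map onto `J_n` from the infinite strip, whose columns are copies of the star
`a, b, c, d` with each of `b`, `c`, `d` running along a bi-infinite path. Going once around, that
is, `n` columns along the strip, applies the twist. -/
def cover (n : ℕ) [NeZero n] (k : ℤ) (x : Fin 4) : FV n :=
  (⟨(k % n).toNat, (Int.toNat_lt' (NeZero.pos n)).2 <|
    Int.emod_lt_of_pos k (Int.natCast_pos.2 (NeZero.pos n))⟩, (twist ^ (k / n)) x)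

theorem twist_zpow_zero (m : ℤ) : (twist ^ m) 0 = 0 :=
  Equiv.Perm.zpow_apply_eq_self_of_apply_eq_self (by decide) m

theorem twist_zpow_eq_iff (m : ℤ) {x y : Fin 4} (hy : twist y = y) : (twist ^ m) x = y ↔ x = y := by
  rw [← Equiv.Perm.eq_inv_iff_eq, ← zpow_neg,
    Equiv.Perm.zpow_apply_eq_self_of_apply_eq_self hy]

theorem twist_zpow_eq_zero_iff (m : ℤ) {x : Fin 4} : (twist ^ m) x = 0 ↔ x = 0 :=
  twist_zpow_eq_iff m (by decide)

theorem cover_natCast (i : Fin n) (x : Fin 4) : cover n (i : ℕ) x = (i, x) := by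
  have hi : ((i : ℕ) : ℤ) < n := mod_cast i.2
  have h0 : (0 : ℤ) ≤ (i : ℕ) := by positivity
  ext1
  · ext1; simp [cover, Int.emod_eq_of_lt h0 hi]
  · simp [cover, Int.ediv_eq_zero_of_lt h0 hi]

theorem cover_add_mul (k m : ℤ) (x : Fin 4) :
    cover n (k + n * m) x = cover n k ((twist ^ m) x) := by
  have hn : (n : ℤ) ≠ 0 := mod_cast NeZero.ne n
  simp [cover, Int.add_mul_ediv_left _ _ hn, zpow_add]

theorem cover_inj {k l : ℤ} {x y : Fin 4} (hkl : |k - l| < n) :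
    cover n k x = cover n l y ↔ k = l ∧ x = y := by
  refine ⟨fun h => ?_, by rintro ⟨rfl, rfl⟩; rfl⟩
  simp only [cover, Prod.mk.injEq, Fin.mk.injEq] at h
  obtain ⟨hmod, hrow⟩ := h
  have hn : (n : ℤ) ≠ 0 := mod_cast NeZero.ne n
  have hk := Int.emod_nonneg k hn
  have hl := Int.emod_nonneg l hn
  obtain rfl : k = l := sub_eq_zero.1 <|
    Int.eq_zero_of_abs_lt_dvd (Int.ModEq.dvd (show l % n = k % n by omega)) hkl
  exact ⟨rfl, (twist ^ (k / n)).injective hrow⟩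

theorem cover_add_one (i : Fin n) (x : Fin 4) : cover n ((i : ℕ) + 1) x =
    if h : (i : ℕ) + 1 < n then (⟨i + 1, h⟩, x) else (0, twist x) := by
  split_ifs with h
  · exact_mod_cast cover_natCast ⟨i + 1, h⟩ x
  · have hi : ((i : ℕ) : ℤ) + 1 = (0 : Fin n) + n * 1 := by
      have := i.2
      rw [Fin.val_zero, Nat.cast_zero]; omega
    rw [hi, cover_add_mul, cover_natCast, zpow_one]

theorem cover_sub_one (i : Fin n) (x : Fin 4) : cover n ((i : ℕ) - 1) x =
    if 0 < (i : ℕ) then (⟨i - 1, by omega⟩, x)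
    else (⟨n - 1, by have := i.2; omega⟩, twist x) := by
  split_ifs with h
  · rw [← cover_natCast]
    push_cast [Nat.cast_sub h]
    rfl
  · have hi : ((i : ℕ) : ℤ) - 1 = (n - 1 : ℕ) + n * (-1) := by
      have := i.2
      omega
    rw [hi, cover_add_mul, ← cover_natCast, zpow_neg_one]
    rfl

theorem adj_row_iff_base (hn : 3 ≤ n) (i : Fin n) {x : Fin 4} (hx : x ≠ 0) (y : FV n) :
    (flowerSnark n).Adj (i, x) y ↔
      y = (i, 0) ∨ y = cover n ((i : ℕ) - 1) x ∨ y = cover n ((i : ℕ) + 1) x := by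
  obtain ⟨j, z⟩ := y
  have hi := i.2
  have hj := j.2
  have hmod : ∀ a < n, (a + 1) % n = if a + 1 < n then a + 1 else 0 := fun a ha => by
    split_ifs with h
    · exact Nat.mod_eq_of_lt h
    · rw [show a + 1 = n by omega, Nat.mod_self]
  have htwist : ∀ x : Fin 4, twist x = if x = 2 then 3 else if x = 3 then 2 else x := by decide
  rw [cover_add_one, cover_sub_one, flowerSnark, SimpleGraph.fromRel_adj, hmod _ hi, hmod _ hj,
    htwist]
  have h13 : x = 1 ∨ x = 2 ∨ x = 3 := by omega
  have hz : z = 0 ∨ z = 1 ∨ z = 2 ∨ z = 3 := by omega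
  rcases h13 with rfl | rfl | rfl <;> rcases hz with rfl | rfl | rfl | rfl <;> split_ifs <;>
    simp only [Prod.mk.injEq, Fin.reduceEq, Fin.ext_iff (n := n), Fin.val_zero, and_true, and_false,
      true_and, ne_eq, not_true, not_false_eq_true, or_false, false_or, iff_false] <;>
    omega

theorem exists_eq_natCast_add_mul (n : ℕ) [NeZero n] (k : ℤ) :
    ∃ (i : Fin n) (m : ℤ), k = (i : ℕ) + n * m :=
  ⟨⟨(k % n).toNat, (cover n k 0).1.2⟩, k / n, by
    rw [Int.toNat_of_nonneg (Int.emod_nonneg k (mod_cast NeZero.ne n)), Int.emod_add_mul_ediv]⟩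

theorem adj_cover_hub_iff {k : ℤ} {y : FV n} :
    (flowerSnark n).Adj (cover n k 0) y ↔ ∃ x ≠ 0, y = cover n k x := by
  obtain ⟨i, m, rfl⟩ := exists_eq_natCast_add_mul n k
  simp only [cover_add_mul, cover_natCast, twist_zpow_zero, adj_hub_iff_base]
  rw [← (twist ^ m).exists_congr_right]
  simp only [ne_eq, twist_zpow_eq_zero_iff]

theorem adj_cover_row_iff (hn : 3 ≤ n) {k : ℤ} {x : Fin 4} (hx : x ≠ 0) {y : FV n} (ε : ℤˣ) :
    (flowerSnark n).Adj (cover n k x) y ↔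
      y = cover n k 0 ∨ y = cover n (k - ε) x ∨ y = cover n (k + ε) x := by
  obtain ⟨i, m, rfl⟩ := exists_eq_natCast_add_mul n k
  have hbase := adj_row_iff_base hn i (mt (twist_zpow_eq_zero_iff m).1 hx) y
  simp only [← cover_add_mul, ← cover_natCast i (_ : Fin 4)] at hbase
  rw [← twist_zpow_zero m, ← cover_add_mul, sub_add_eq_add_sub, add_right_comm] at hbase
  rcases Int.units_eq_one_or ε with rfl | rfl
  · simpa using hbase
  · rw [hbase, or_comm (a := y = cover n (_ - 1) x)]
    simp [sub_eq_add_neg]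

end Cover

/-! ### Guards on the strip -/

section Strip

/-- The number of guards in a column of the strip, of which `g x` are on the vertex `x`. -/
def weight (g : Fin 4 → ℕ) : ℕ := ∑ x, g x

/-- What the unguarded vertex `x` of column `k` needs to be defended from the hub of its column. -/
def HubDefends (F : ℤ → Fin 4 → ℕ) (k : ℤ) (x : Fin 4) : Prop :=
  1 ≤ F k 0 ∧ (2 ≤ F k 0 ∨ ∀ y ≠ 0, y ≠ x → 1 ≤ F k y ∨ 1 ≤ F (k - 1) y ∨ 1 ≤ F (k + 1) y)

/-- What the unguarded vertex `x` of column `k` needs to be defended along its row from column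
`k + ε`, as far as the hub of that column is concerned. -/
def RowDefends (F : ℤ → Fin 4 → ℕ) (k : ℤ) (x : Fin 4) (ε : ℤˣ) : Prop :=
  1 ≤ F (k + ε) x ∧ 2 ≤ weight (F (k + ε))

/-- The vertex `x` of column `k + 2 * ε` survives the loss of a guard on its neighbour in column
`k + ε`. -/
def RowCovered (F : ℤ → Fin 4 → ℕ) (k : ℤ) (x : Fin 4) (ε : ℤˣ) : Prop :=
  2 ≤ F (k + ε) x ∨ 1 ≤ F (k + 2 * ε) 0 ∨ 1 ≤ F (k + 2 * ε) x ∨ 1 ≤ F (k + 3 * ε) x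

/-- The constraints on a guard function on the strip that come from `J_n` with `3 ≤ n`. -/
structure Guarded (F : ℤ → Fin 4 → ℕ) : Prop where
  one_le_weight : ∀ k, 1 ≤ weight (F k)
  defended : ∀ k, ∀ x ≠ 0, F k x = 0 → HubDefends F k x ∨ ∃ ε, RowDefends F k x ε

/-- The constraints on a guard function on the strip that come from `J_n` with `4 ≤ n`. In `J_3`,
the vertices `(k, x)` and `(k + 3, x)` of the strip may coincide, so that a guard moved to the
former also covers the neighbours of the latter. -/
structure StronglyGuarded (F : ℤ → Fin 4 → ℕ) : Prop where
  one_le_weight : ∀ k, 1 ≤ weight (F k)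
  defended : ∀ k, ∀ x ≠ 0, F k x = 0 →
    HubDefends F k x ∨ ∃ ε, RowDefends F k x ε ∧ RowCovered F k x ε

variable {F : ℤ → Fin 4 → ℕ} {k : ℤ} {x y : Fin 4}

theorem StronglyGuarded.guarded (h : StronglyGuarded F) : Guarded F where
  one_le_weight := h.one_le_weight
  defended k x hx hx0 := (h.defended k x hx hx0).imp_right fun ⟨ε, hε⟩ => ⟨ε, hε.1⟩

/-- The strip read from column `k` on, in the direction `ε`. -/
def readFrom (F : ℤ → Fin 4 → ℕ) (k : ℤ) (ε : ℤˣ) (i : ℤ) : Fin 4 → ℕ := F (k + ε * i)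

theorem hubDefends_readFrom (ε : ℤˣ) (i : ℤ) :
    HubDefends (readFrom F k ε) i x ↔ HubDefends F (k + ε * i) x := by
  rcases Int.units_eq_one_or ε with rfl | rfl
  · simp [HubDefends, readFrom, add_assoc, add_sub_assoc]
  · simp only [HubDefends, readFrom, Units.val_neg, Units.val_one, neg_one_mul, neg_sub, neg_add,
      ← sub_eq_add_neg, sub_add_eq_add_sub, ← add_sub_assoc, sub_sub]
    simp only [or_comm (a := 1 ≤ F (k + 1 - i) _)]

theorem Guarded.reparam (h : Guarded F) (k : ℤ) (ε : ℤˣ) : Guarded (readFrom F k ε) where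
  one_le_weight i := h.one_le_weight _
  defended i x hx hx0 := by
    refine (h.defended _ x hx hx0).imp (hubDefends_readFrom ε i).2 fun ⟨δ, hδ⟩ => ⟨ε * δ, ?_⟩
    have hcol : k + ε * (i + (ε * δ : ℤˣ)) = k + ε * i + δ := by
      push_cast
      linear_combination (δ : ℤ) * Int.units_coe_mul_self ε
    simpa only [RowDefends, weight, readFrom, hcol] using hδ

theorem StronglyGuarded.reparam (h : StronglyGuarded F) (k : ℤ) (ε : ℤˣ) :
    StronglyGuarded (readFrom F k ε) where
  one_le_weight i := h.one_le_weight _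
  defended i x hx hx0 := by
    refine (h.defended _ x hx hx0).imp (hubDefends_readFrom ε i).2 fun ⟨δ, hδ⟩ => ⟨ε * δ, ?_⟩
    have hcol : ∀ j : ℤ, k + ε * (i + j * (ε * δ : ℤˣ)) = k + ε * i + j * δ := fun j => by
      push_cast
      linear_combination j * δ * Int.units_coe_mul_self ε
    have hcol' := hcol 1
    rw [one_mul, one_mul] at hcol'
    simpa only [RowDefends, RowCovered, weight, readFrom, hcol, hcol'] using hδ

theorem le_weight (g : Fin 4 → ℕ) (x : Fin 4) : g x ≤ weight g :=
  Finset.single_le_sum (fun _ _ => Nat.zero_le _) (Finset.mem_univ x)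

theorem add_le_weight (g : Fin 4 → ℕ) (hxy : x ≠ y) : g x + g y ≤ weight g := by
  rw [weight, ← Finset.sum_pair hxy]
  exact Finset.sum_le_sum_of_subset (Finset.subset_univ _)

end Strip

/-! ### Forbidden patterns of column weights -/

section Patterns

variable {F : ℤ → Fin 4 → ℕ} {g : Fin 4 → ℕ} {k : ℤ} {p s x y : Fin 4}

/-- A column with one guard on each of the two rows other than `p`, and no other guard. -/
structure IsCorow (g : Fin 4 → ℕ) (p : Fin 4) : Prop where
  ne_zero : p ≠ 0
  hub : g 0 = 0
  row : g p = 0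
  eq_one : ∀ x ≠ 0, x ≠ p → g x = 1

theorem IsCorow.weight_eq (h : IsCorow g p) : weight g = 2 := by
  have hg : ∀ x, g x = if x = 0 ∨ x = p then 0 else 1 := fun x => by
    split_ifs with hx
    · rcases hx with rfl | rfl
      exacts [h.hub, h.row]
    · exact h.eq_one x (mt Or.inl hx) (mt Or.inr hx)
  have hsum : ∀ p : Fin 4, p ≠ 0 → ∑ x : Fin 4, (if x = 0 ∨ x = p then 0 else 1) = 2 := by decide
  rw [weight, Finset.sum_congr rfl fun x _ => hg x, hsum p h.ne_zero]

theorem exists_isCorow (hw : weight g ≤ 2)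
    (hrow : ∀ x ≠ 0, ∀ y ≠ 0, x ≠ y → g x = 0 → g y ≠ 0) : ∃ p, IsCorow g p := by
  rw [weight, Fin.sum_univ_four] at hw
  have h12 := hrow 1 (by decide) 2 (by decide) (by decide)
  have h13 := hrow 1 (by decide) 3 (by decide) (by decide)
  have h23 := hrow 2 (by decide) 3 (by decide) (by decide)
  have hcorow : ∀ p ≠ 0, g p = 0 → ∃ p, IsCorow g p := fun p hp hp0 =>
    ⟨p, hp, by omega, hp0, fun x hx hxp => by
      have hx' : x = 1 ∨ x = 2 ∨ x = 3 := by omega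
      have hp' : p = 1 ∨ p = 2 ∨ p = 3 := by omega
      rcases hx' with rfl | rfl | rfl <;> rcases hp' with rfl | rfl | rfl <;> omega⟩
  by_cases h1 : g 1 = 0
  · exact hcorow 1 (by decide) h1
  by_cases h2 : g 2 = 0
  · exact hcorow 2 (by decide) h2
  · exact hcorow 3 (by decide) (by omega)

theorem Guarded.hubDefends (h : Guarded F) (hx : x ≠ 0) (hx0 : F k x = 0)
    (hl : F (k - 1) x = 0 ∨ weight (F (k - 1)) ≤ 1)
    (hr : F (k + 1) x = 0 ∨ weight (F (k + 1)) ≤ 1) : HubDefends F k x := by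
  refine (h.defended k x hx hx0).resolve_right fun ⟨ε, h1, h2⟩ => ?_
  rcases Int.units_eq_one_or ε with rfl | rfl
  · rw [Units.val_one] at h1 h2
    omega
  · rw [Units.val_neg, Units.val_one, ← sub_eq_add_neg] at h1 h2
    omega

theorem Guarded.one_le_of_empty_rows (h : Guarded F) (hx : x ≠ 0) (hy : y ≠ 0) (hxy : x ≠ y)
    (h0 : weight (F 0) = 1) (h1 : weight (F 1) = 1) (hhub : 1 ≤ F 1 0)
    (hx2 : F 2 x = 0) (hy2 : F 2 y = 0) : 1 ≤ F 0 y := by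
  have hx1 : F 1 x = 0 := by have := add_le_weight (F 1) hx; omega
  have hy1 : F 1 y = 0 := by have := add_le_weight (F 1) hy; omega
  have hhub1 : F 1 0 ≤ 1 := h1 ▸ le_weight (F 1) 0
  obtain ⟨-, htwo | hrow⟩ :=
    h.hubDefends hx hx1 (Or.inr (by norm_num [h0])) (Or.inl (by norm_num [hx2]))
  · omega
  · have := hrow y hy hxy.symm
    norm_num at this
    omega

-- If two rows of column 2 are empty, their vertices in column 1 can only be defended from the hub
-- of that column, but this needs guards on both rows of column 0.
theorem Guarded.exists_isCorow (h : Guarded F) (h0 : weight (F 0) = 1) (h1 : weight (F 1) = 1)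
    (h2 : weight (F 2) ≤ 2) : ∃ p, IsCorow (F 2) p := by
  refine FlowerSnark.exists_isCorow h2 fun x hx y hy hxy hx2 hy2 => ?_
  by_cases hhub : 1 ≤ F 1 0
  · have hy0 := h.one_le_of_empty_rows hx hy hxy h0 h1 hhub hx2 hy2
    have hx0 := h.one_le_of_empty_rows hy hx hxy.symm h0 h1 hhub hy2 hx2
    have := add_le_weight (F 0) hxy
    omega
  · have hguard : ∀ z ≠ 0, F 2 z = 0 → 1 ≤ F 1 z := fun z hz hz2 => by
      by_contra! hz1
      exact hhub (h.hubDefends hz (by omega) (Or.inr (by norm_num [h0]))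
        (Or.inl (by norm_num [hz2]))).1
    have := add_le_weight (F 1) hxy
    have := hguard x hx hx2
    have := hguard y hy hy2
    omega

theorem Guarded.not_weight_one_one_one (h : Guarded F) :
    ¬ (weight (F 0) = 1 ∧ weight (F 1) = 1 ∧ weight (F 2) = 1) := by
  rintro ⟨h0, h1, h2⟩
  obtain ⟨p, hp⟩ := h.exists_isCorow h0 h1 (by omega)
  have := hp.weight_eq
  omega

theorem Guarded.not_weight_one_one_two_one (h : Guarded F) :
    ¬ (weight (F 0) = 1 ∧ weight (F 1) = 1 ∧ weight (F 2) = 2 ∧ weight (F 3) = 1) := by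
  rintro ⟨h0, h1, h2, h3⟩
  obtain ⟨p, hp⟩ := h.exists_isCorow h0 h1 h2.le
  have hhub := (h.hubDefends hp.ne_zero hp.row (Or.inr (by norm_num [h1]))
    (Or.inr (by norm_num [h3]))).1
  have := hp.hub
  omega

theorem eq_of_weight_eq_one (hw : weight g = 1) (hx : 1 ≤ g x) (hy : 1 ≤ g y) : x = y := by
  by_contra hxy
  have := add_le_weight g hxy
  omega

theorem Guarded.one_le_hub (h : Guarded F) (hl : weight (F (k - 1)) = 1) (hw : weight (F k) = 2)
    (hr : weight (F (k + 1)) = 1) : 1 ≤ F k 0 := by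
  by_contra! h0
  have hrow : ∀ x ≠ 0, 1 ≤ F k x := fun x hx => by
    by_contra! hx0
    exact h0.not_ge (h.hubDefends hx (by omega) (Or.inr hl.le) (Or.inr hr.le)).1
  have h1 := hrow 1 (by decide)
  have h2 := hrow 2 (by decide)
  have h3 := hrow 3 (by decide)
  rw [weight, Fin.sum_univ_four] at hw
  omega

theorem exists_row_ne (x y : Fin 4) : ∃ z ≠ 0, z ≠ x ∧ z ≠ y := by
  decide +revert

theorem eq_of_weight_eq_two (hw : weight g = 2) (h0 : 1 ≤ g 0) (hx : x ≠ 0) (hy : y ≠ 0)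
    (hgx : 1 ≤ g x) (hgy : 1 ≤ g y) : x = y := by
  by_contra hxy
  have hsum : ∑ z ∈ {0, x, y}, g z ≤ weight g :=
    Finset.sum_le_sum_of_subset (Finset.subset_univ _)
  rw [Finset.sum_insert (by simp [hx.symm, hy.symm]), Finset.sum_pair hxy] at hsum
  omega

theorem exists_one_le (hw : 1 ≤ weight g) : ∃ x, 1 ≤ g x := by
  by_contra! h
  simp [weight, fun x => Nat.lt_one_iff.1 (h x)] at hw

theorem exists_forall_not_hubDefends (h0 : weight (F 0) = 2) (h1 : weight (F 1) = 1)
    (h2 : weight (F 2) = 2) (hub0 : 1 ≤ F 0 0) (hub2 : 1 ≤ F 2 0) :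
    ∃ t, ∀ x ≠ 0, x ≠ t → F 1 x = 0 ∧ ¬ HubDefends F 1 x := by
  obtain ⟨z, hz⟩ := exists_one_le h1.ge
  have hz0 : ∀ x ≠ z, F 1 x = 0 := fun x hxz => by
    by_contra hx
    exact hxz (eq_of_weight_eq_one h1 (by omega) hz)
  rcases eq_or_ne z 0 with rfl | hz'
  · obtain ⟨t, ht, ht0, ht2⟩ : ∃ t ≠ 0, F 0 t = 0 ∧ F 2 t = 0 := by
      by_contra! hrow
      have hrow1 := hrow 1 (by decide)
      have hrow2 := hrow 2 (by decide)
      have hrow3 := hrow 3 (by decide)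
      rw [weight, Fin.sum_univ_four] at h0 h2
      omega
    refine ⟨t, fun x hx hxt => ⟨hz0 x hx, fun ⟨_, hdef⟩ => ?_⟩⟩
    have hle := le_weight (F 1) 0
    have hcov := hdef.resolve_left (by omega) t ht hxt.symm
    norm_num [hz0 t ht, ht0, ht2] at hcov
  · exact ⟨z, fun x _ hxz => ⟨hz0 x hxz, fun hdef => by
      have := hdef.1
      have := hz0 0 hz'.symm
      omega⟩⟩

theorem StronglyGuarded.exists_rowCovered (h : StronglyGuarded F) (h0 : weight (F 0) = 2)
    (h1 : weight (F 1) = 1) (h2 : weight (F 2) = 2) (hub0 : 1 ≤ F 0 0) (hub2 : 1 ≤ F 2 0) :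
    ∃ r ≠ 0, ∃ s ≠ 0, r ≠ s ∧ 1 ≤ F 0 r ∧ 1 ≤ F 2 s ∧ F 1 r = 0 ∧ F 1 s = 0 ∧
      RowCovered F 1 r (-1) ∧ RowCovered F 1 s 1 := by
  obtain ⟨t, hnot⟩ := exists_forall_not_hubDefends h0 h1 h2 hub0 hub2
  have hrow : ∀ x ≠ 0, x ≠ t →
      (1 ≤ F 0 x ∧ RowCovered F 1 x (-1)) ∨ (1 ≤ F 2 x ∧ RowCovered F 1 x 1) := by
    intro x hx hxt
    obtain ⟨hx0, hhub⟩ := hnot x hx hxt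
    obtain ⟨ε, ⟨hdef, -⟩, hcov⟩ := (h.defended 1 x hx hx0).resolve_left hhub
    rcases Int.units_eq_one_or ε with rfl | rfl
    · exact Or.inr ⟨by simpa using hdef, hcov⟩
    · exact Or.inl ⟨by simpa using hdef, hcov⟩
  obtain ⟨x, hx, hxt, -⟩ := exists_row_ne t t
  obtain ⟨y, hy, hyt, hyx⟩ := exists_row_ne t x
  have hx1 := (hnot x hx hxt).1
  have hy1 := (hnot y hy hyt).1
  rcases hrow x hx hxt with ⟨hdx, hcx⟩ | ⟨hdx, hcx⟩ <;>
    rcases hrow y hy hyt with ⟨hdy, hcy⟩ | ⟨hdy, hcy⟩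
  · exact absurd (eq_of_weight_eq_two h0 hub0 hy hx hdy hdx) hyx
  · exact ⟨x, hx, y, hy, hyx.symm, hdx, hdy, hx1, hy1, hcx, hcy⟩
  · exact ⟨y, hy, x, hx, hyx, hdy, hdx, hy1, hx1, hcy, hcx⟩
  · exact absurd (eq_of_weight_eq_two h2 hub2 hy hx hdy hdx) hyx

-- The row guards of columns 1, 3 and 5 lie on rows `r`, `s` and `q` with `r ≠ s ≠ q`. As the guard
-- on row `s` of column 3 can leave in both directions, both neighbouring columns have their guard
-- on the hub, and then the hub of column 3 cannot defend its rows.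
theorem StronglyGuarded.not_weight_alternating (h : StronglyGuarded F) :
    ¬ (weight (F 0) = 1 ∧ weight (F 1) = 2 ∧ weight (F 2) = 1 ∧ weight (F 3) = 2 ∧
      weight (F 4) = 1 ∧ weight (F 5) = 2 ∧ weight (F 6) = 1) := by
  rintro ⟨h0, h1, h2, h3, h4, h5, h6⟩
  have hub1 : 1 ≤ F 1 0 := h.guarded.one_le_hub h0 h1 h2
  have hub3 : 1 ≤ F 3 0 := h.guarded.one_le_hub h2 h3 h4
  have hub5 : 1 ≤ F 5 0 := h.guarded.one_le_hub h4 h5 h6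
  obtain ⟨r, hr, s, hs, hrs, hr1, hs3, -, hs2, -, hcov⟩ :=
    (h.reparam 1 1).exists_rowCovered h1 h2 h3 hub1 hub3
  obtain ⟨s', hs', q, hq, hsq, hs'3, hq5, hs'4, -, hcov', -⟩ :=
    (h.reparam 3 1).exists_rowCovered h3 h4 h5 hub3 hub5
  norm_num [readFrom, RowCovered] at hr1 hs3 hs2 hcov hs'3 hq5 hs'4 hcov'
  obtain rfl : s = s' := eq_of_weight_eq_two h3 hub3 hs hs' hs3 hs'3
  have hs1 : F 1 s = 0 := by
    by_contra hne
    exact hrs (eq_of_weight_eq_two h1 hub1 hr hs hr1 (by omega))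
  have hs5 : F 5 s = 0 := by
    by_contra hne
    exact hsq (eq_of_weight_eq_two h5 hub5 hs hq (by omega) hq5)
  have hle := add_le_weight (F 3) hs
  have hub2 : 1 ≤ F 2 0 := by omega
  have hub4 : 1 ≤ F 4 0 := by omega
  have hempty : ∀ x ≠ 0, x ≠ s → F 2 x = 0 ∧ F 3 x = 0 ∧ F 4 x = 0 := fun x hx hxs => by
    have := add_le_weight (F 2) hx
    have := add_le_weight (F 4) hx
    have : ¬ 1 ≤ F 3 x := fun hx3 => hxs (eq_of_weight_eq_two h3 hub3 hx hs hx3 hs3)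
    omega
  obtain ⟨x, hx, hxs, -⟩ := exists_row_ne s s
  obtain ⟨y, hy, hys, hyx⟩ := exists_row_ne s x
  obtain ⟨-, hdef⟩ := h.guarded.hubDefends hx (hempty x hx hxs).2.1 (Or.inr h2.le) (Or.inr h4.le)
  have hcovy := hdef.resolve_left (by omega) y hy hyx
  norm_num [hempty y hy hys] at hcovy

/-- Columns `0, …, 5` have weights `1, 1, 2, 2, 1, 1`, with columns `2` and `3` missing the rows
`p` and `s`. -/
structure IsBlock (F : ℤ → Fin 4 → ℕ) (p s : Fin 4) : Prop where
  weight_zero : weight (F 0) = 1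
  weight_one : weight (F 1) = 1
  corow_two : IsCorow (F 2) p
  corow_three : IsCorow (F 3) s
  weight_four : weight (F 4) = 1
  weight_five : weight (F 5) = 1

theorem Guarded.exists_isBlock (h : Guarded F) (h0 : weight (F 0) = 1) (h1 : weight (F 1) = 1)
    (h2 : weight (F 2) = 2) (h3 : weight (F 3) = 2) (h4 : weight (F 4) = 1)
    (h5 : weight (F 5) = 1) : ∃ p s, IsBlock F p s := by
  obtain ⟨p, hp⟩ := h.exists_isCorow h0 h1 h2.le
  have hs := (h.reparam 5 (-1)).exists_isCorow
  norm_num [readFrom, h3, h4, h5] at hs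
  obtain ⟨s, hs⟩ := hs
  exact ⟨p, s, h0, h1, hp, hs, h4, h5⟩

theorem IsBlock.symm (hB : IsBlock F p s) : IsBlock (readFrom F 5 (-1)) s p :=
  ⟨hB.weight_five, hB.weight_four, hB.corow_three, hB.corow_two, hB.weight_one, hB.weight_zero⟩

theorem IsBlock.ne_and_covered (hB : IsBlock F p s) (h : StronglyGuarded F) :
    p ≠ s ∧ (1 ≤ F 4 0 ∨ 1 ≤ F 4 p ∨ 1 ≤ F 5 p) := by
  have hp := hB.corow_two
  obtain ⟨ε, hdef, hcov⟩ := (h.defended 2 p hp.ne_zero hp.row).resolve_left fun hhub => by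
    have := hhub.1
    have := hp.hub
    omega
  rcases Int.units_eq_one_or ε with rfl | rfl
  · have hps : p ≠ s := by
      rintro rfl
      have := hdef.1
      norm_num [hB.corow_three.row] at this
    norm_num [RowCovered, hB.corow_three.eq_one p hp.ne_zero hps] at hcov
    exact ⟨hps, hcov⟩
  · have := hdef.2
    norm_num [hB.weight_one] at this

theorem IsBlock.of_hub_eq_zero (hB : IsBlock F p s) (h : StronglyGuarded F) (hub : F 1 0 = 0) :
    1 ≤ F 0 s ∧ 1 ≤ F 1 p ∧ 1 ≤ F 4 s := by
  have hp := hB.corow_two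
  have hs := hB.corow_three
  obtain ⟨hps, -⟩ := hB.ne_and_covered h
  have hp1 : 1 ≤ F 1 p := by
    by_contra! hp1
    have := (h.guarded.hubDefends (k := 1) hp.ne_zero (by omega) (Or.inr hB.weight_zero.le)
      (Or.inl hp.row)).1
    omega
  have hs1 : F 1 s = 0 := by
    by_contra hs1
    exact hps (eq_of_weight_eq_one hB.weight_one hp1 (by omega))
  have hs0 : 1 ≤ F 1 0 ∨ 1 ≤ F 1 s ∨ 1 ≤ F 0 s := (hB.symm.ne_and_covered (h.reparam 5 (-1))).2
  refine ⟨by omega, hp1, ?_⟩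
  obtain ⟨ε, hdef, hcov⟩ := (h.defended 1 s hs.ne_zero hs1).resolve_left fun hhub => by
    have := hhub.1
    omega
  rcases Int.units_eq_one_or ε with rfl | rfl
  · norm_num [RowCovered, hp.eq_one s hs.ne_zero hps.symm, hs.hub, hs.row] at hcov
    exact hcov
  · have := hdef.2
    norm_num [hB.weight_zero] at this

theorem IsBlock.rows_of_hub_eq_zero (hB : IsBlock F p s) (h : StronglyGuarded F)
    (hub : F 1 0 = 0) : 1 ≤ F 0 s ∧ 1 ≤ F 1 p ∧ 1 ≤ F 4 s ∧ 1 ≤ F 5 p := by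
  obtain ⟨hs0, hp1, hs4⟩ := hB.of_hub_eq_zero h hub
  have hub4 : F 4 0 = 0 := by
    by_contra hne
    exact hB.corow_three.ne_zero (eq_of_weight_eq_one hB.weight_four hs4 (by omega))
  exact ⟨hs0, hp1, hs4, (hB.symm.of_hub_eq_zero (h.reparam 5 (-1)) hub4).1⟩

theorem IsBlock.hub_five_eq_zero (hB : IsBlock F p s) (h : StronglyGuarded F) : F 5 0 = 0 := by
  have hp := hB.corow_two
  have hs := hB.corow_three
  suffices hrow : ∃ x ≠ 0, 1 ≤ F 5 x by
    obtain ⟨x, hx, hx5⟩ := hrow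
    by_contra hne
    exact hx (eq_of_weight_eq_one hB.weight_five hx5 (by omega))
  by_cases hub1 : F 1 0 = 0
  · exact ⟨p, hp.ne_zero, (hB.rows_of_hub_eq_zero h hub1).2.2.2⟩
  by_cases hub4 : F 4 0 = 0
  · exact ⟨p, hp.ne_zero, (hB.symm.of_hub_eq_zero (h.reparam 5 (-1)) hub4).1⟩
  have hrow4 : ∀ x ≠ 0, F 4 x = 0 := fun x hx => by
    by_contra hne
    exact hx (eq_of_weight_eq_one hB.weight_four (x := x) (by omega) (by omega))
  have hrow1 : F 1 p = 0 := by
    by_contra hne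
    exact hp.ne_zero (eq_of_weight_eq_one hB.weight_one (x := p) (by omega) (by omega))
  obtain ⟨hps, -⟩ := hB.ne_and_covered h
  refine ⟨s, hs.ne_zero, ?_⟩
  rcases h.defended 4 p hp.ne_zero (hrow4 p hp.ne_zero) with ⟨-, hdef⟩ | ⟨ε, hdef, hcov⟩
  · have hle := le_weight (F 4) 0
    have hcovs := hdef.resolve_left (by have := hB.weight_four; omega) s hs.ne_zero hps.symm
    norm_num [hrow4 s hs.ne_zero, hs.row] at hcovs
    exact hcovs
  rcases Int.units_eq_one_or ε with rfl | rfl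
  · have := hdef.2
    norm_num [hB.weight_five] at this
  · norm_num [RowCovered, hs.eq_one p hp.ne_zero hps, hp.hub, hp.row, hrow1] at hcov

theorem StronglyGuarded.rows_of_weight_periodic (h : StronglyGuarded F)
    (hw : ∀ m : ℕ, weight (F (4 * m)) = 1 ∧ weight (F (4 * m + 1)) = 1 ∧
      weight (F (4 * m + 2)) = 2 ∧ weight (F (4 * m + 3)) = 2) :
    ∃ s ≠ 0, ∃ p ≠ 0, p ≠ s ∧
      ∀ m : ℕ, 1 ≤ F (4 * (m + 1 : ℕ)) s ∧ 1 ≤ F (4 * (m + 1 : ℕ) + 1) p := by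
  have hblock : ∀ m : ℕ, ∃ p s, IsBlock (readFrom F (4 * m) 1) p s := fun m => by
    have h0 := hw m
    have h4 := hw (m + 1)
    push_cast [mul_add, add_assoc] at h4
    apply (h.reparam (4 * m) 1).guarded.exists_isBlock <;> simp [readFrom, h0, h4]
  have hub : ∀ m : ℕ, F (4 * (m + 1 : ℕ) + 1) 0 = 0 := fun m => by
    obtain ⟨p, s, hB⟩ := hblock m
    have hub5 := hB.hub_five_eq_zero (h.reparam _ 1)
    push_cast [readFrom, mul_add, add_assoc] at hub5 ⊢
    simpa using hub5
  have hrows : ∀ m : ℕ, ∃ p s, p ≠ 0 ∧ s ≠ 0 ∧ p ≠ s ∧ 1 ≤ F (4 * (m + 1 : ℕ)) s ∧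
      1 ≤ F (4 * (m + 1 : ℕ) + 1) p ∧ 1 ≤ F (4 * (m + 2 : ℕ)) s ∧
      1 ≤ F (4 * (m + 2 : ℕ) + 1) p := fun m => by
    obtain ⟨p, s, hB⟩ := hblock (m + 1)
    have hrow := hB.rows_of_hub_eq_zero (h.reparam _ 1) (by simpa [readFrom] using hub m)
    refine ⟨p, s, hB.corow_two.ne_zero, hB.corow_three.ne_zero,
      (hB.ne_and_covered (h.reparam _ 1)).1, ?_⟩
    push_cast [readFrom, mul_add, add_assoc] at hrow ⊢
    simpa using hrow
  obtain ⟨p, s, hp, hs, hps, hs0, hp0, -⟩ := hrows 0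
  refine ⟨s, hs, p, hp, hps, fun m => ?_⟩
  induction m with
  | zero => exact ⟨hs0, hp0⟩
  | succ m ih =>
    obtain ⟨p', s', -, -, -, hs1, hp1, hs2, hp2⟩ := hrows m
    obtain rfl := eq_of_weight_eq_one (hw (m + 1)).1 ih.1 hs1
    obtain rfl := eq_of_weight_eq_one (hw (m + 1)).2.1 ih.2 hp1
    exact ⟨hs2, hp2⟩

end Patterns

/-! ### Discharging -/

section Discharging

/-- The constraints on the sequence of column weights on which the discharging relies. -/
structure Admissible (w : ℤ → ℕ) : Prop where
  one_le : ∀ k, 1 ≤ w k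
  not_one_one_one : ∀ k, ¬ (w k = 1 ∧ w (k + 1) = 1 ∧ w (k + 2) = 1)
  not_one_one_two_one : ∀ k, ¬ (w k = 1 ∧ w (k + 1) = 1 ∧ w (k + 2) = 2 ∧ w (k + 3) = 1)
  not_one_two_one_one : ∀ k, ¬ (w k = 1 ∧ w (k + 1) = 2 ∧ w (k + 2) = 1 ∧ w (k + 3) = 1)

/-- The charge that a column of weight `y` receives from a neighbour of weight `z`, if its other
neighbour has weight `x`. -/
def received (x y z : ℕ) : ℤ := if y = 1 ∧ z ≠ 1 then (if x = 1 then 2 else 1) else 0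

/-- The final charge of column `k`, for the initial charge `4 * w k - 6`. -/
def charge (w : ℤ → ℕ) (k : ℤ) : ℤ :=
  4 * w k - 6
    + (received (w (k - 1)) (w k) (w (k + 1)) - received (w (k - 2)) (w (k - 1)) (w k))
    - (received (w (k + 2)) (w (k + 1)) (w k) - received (w (k + 1)) (w k) (w (k - 1)))

variable {w : ℤ → ℕ} {n : ℕ}

theorem Admissible.charge_nonneg (h : Admissible w) (k : ℤ) : 0 ≤ charge w k := by
  have h1 := h.one_le k
  have h111 := h.not_one_one_one (k - 1)
  have h1121 := h.not_one_one_two_one (k - 2)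
  have h1211 := h.not_one_two_one_one (k - 1)
  rw [show k - 1 + 1 = k by ring, show k - 1 + 2 = k + 1 by ring] at h111 h1211
  rw [show k - 2 + 1 = k - 1 by ring, show k - 2 + 2 = k by ring,
    show k - 2 + 3 = k + 1 by ring] at h1121
  rw [show k - 1 + 3 = k + 2 by ring] at h1211
  unfold charge received
  split_ifs <;> omega

theorem Admissible.of_charge_eq_zero (h : Admissible w) {k : ℤ} (h0 : charge w k = 0) :
    w k ≤ 2 ∧ (w k = 2 →
      (w (k - 2) = 1 ∧ w (k - 1) = 1 ∧ w (k + 1) ≠ 1) ∨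
      (w (k - 1) ≠ 1 ∧ w (k + 1) = 1 ∧ w (k + 2) = 1) ∨
      (w (k - 2) ≠ 1 ∧ w (k - 1) = 1 ∧ w (k + 1) = 1 ∧ w (k + 2) ≠ 1)) := by
  have := h.one_le k
  unfold charge received at h0
  split_ifs at h0 <;> omega

theorem charge_periodic (hper : Function.Periodic w n) : Function.Periodic (charge w) n :=
  fun k => by simp only [charge, ← sub_add_eq_add_sub, add_right_comm k (n : ℤ), hper _]

theorem sum_range_sub_eq_zero {g : ℤ → ℤ} (hper : Function.Periodic g n) (a : ℤ) :
    ∑ k ∈ Finset.range n, (g (k + a + 1) - g (k + a)) = 0 := by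
  have hsum := Finset.sum_range_sub (fun k : ℕ => g (k + a)) n
  simp only [Nat.cast_add, Nat.cast_one, Nat.cast_zero, add_right_comm _ (1 : ℤ) a] at hsum
  rw [hsum, add_comm (n : ℤ), zero_add, hper, sub_self]

theorem sum_charge (hper : Function.Periodic w n) :
    ∑ k ∈ Finset.range n, charge w k = 4 * ∑ k ∈ Finset.range n, (w k : ℤ) - 6 * n := by
  let fromRight : ℤ → ℤ := fun k => received (w (k - 1)) (w k) (w (k + 1))
  let fromLeft : ℤ → ℤ := fun k => received (w (k + 1)) (w k) (w (k - 1))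
  have hright : Function.Periodic fromRight n := fun k => by
    simp only [fromRight, ← sub_add_eq_add_sub, add_right_comm k (n : ℤ), hper _]
  have hleft : Function.Periodic fromLeft n := fun k => by
    simp only [fromLeft, ← sub_add_eq_add_sub, add_right_comm k (n : ℤ), hper _]
  have hcharge : ∀ k : ℤ, charge w k = 4 * w k - 6
      + (fromRight (k + -1 + 1) - fromRight (k + -1)) - (fromLeft (k + 0 + 1) - fromLeft (k + 0)) :=
    fun k => by simp only [charge, fromRight, fromLeft]; ring_nf
  simp only [hcharge]
  rw [Finset.sum_sub_distrib, Finset.sum_add_distrib, sum_range_sub_eq_zero hright,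
    sum_range_sub_eq_zero hleft, Finset.sum_sub_distrib, ← Finset.mul_sum, Finset.sum_const,
    Finset.card_range, nsmul_eq_mul]
  ring

theorem Admissible.three_mul_le_two_mul_sum (h : Admissible w) (hper : Function.Periodic w n) :
    3 * n ≤ 2 * ∑ k ∈ Finset.range n, w k := by
  have hsum := Finset.sum_nonneg fun (k : ℕ) (_ : k ∈ Finset.range n) => h.charge_nonneg k
  rw [sum_charge hper] at hsum
  zify
  linarith

theorem Admissible.charge_eq_zero [NeZero n] (h : Admissible w) (hper : Function.Periodic w n)
    (heq : 2 * ∑ k ∈ Finset.range n, w k = 3 * n) (k : ℤ) : charge w k = 0 := by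
  obtain ⟨l, ⟨hl0, hln⟩, hkl⟩ := (charge_periodic hper).exists_mem_Ico₀
    (Int.natCast_pos.2 (NeZero.pos n)) k
  have hsum : ∑ k ∈ Finset.range n, charge w k = 0 := by
    zify at heq
    rw [sum_charge hper]
    linarith
  rw [Finset.sum_eq_zero_iff_of_nonneg fun (k : ℕ) _ => h.charge_nonneg k] at hsum
  rw [hkl, ← Int.toNat_of_nonneg hl0]
  exact hsum _ (Finset.mem_range.2 (by omega))

/-- The weights `1, 1, 2, 2` from column `k` on, the pattern of extremal weight sequences. -/
def IsPeriod (w : ℤ → ℕ) (k : ℤ) : Prop :=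
  w k = 1 ∧ w (k + 1) = 1 ∧ w (k + 2) = 2 ∧ w (k + 3) = 2

theorem Admissible.isPeriod_add_four (h : Admissible w) (h0 : ∀ k, charge w k = 0) {k : ℤ}
    (hk : IsPeriod w k) : IsPeriod w (k + 4) := by
  obtain ⟨-, -, hk2, hk3⟩ := hk
  have hone := h.one_le
  have h3 := (h.of_charge_eq_zero (h0 (k + 3))).2 hk3
  have h6 := h.of_charge_eq_zero (h0 (k + 6))
  have h7 := h.of_charge_eq_zero (h0 (k + 7))
  have h111 := h.not_one_one_one (k + 4)
  have h1121 := h.not_one_one_two_one (k + 4)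
  have := hone (k + 6)
  have := hone (k + 7)
  simp only [add_sub_assoc, add_assoc] at h3 h6 h7 h111 h1121
  norm_num at h3 h6 h7 h111 h1121
  simp only [IsPeriod, add_assoc]
  norm_num
  omega

theorem Admissible.isPeriod_of_one_one (h : Admissible w) (h0 : ∀ k, charge w k = 0) {k : ℤ}
    (hk0 : w k = 1) (hk1 : w (k + 1) = 1) : IsPeriod w k := by
  have h2 := h.of_charge_eq_zero (h0 (k + 2))
  have h3 := h.of_charge_eq_zero (h0 (k + 3))
  have h111 := h.not_one_one_one k
  have h1121 := h.not_one_one_two_one k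
  have := h.one_le (k + 2)
  have := h.one_le (k + 3)
  simp only [IsPeriod]
  omega

theorem Admissible.exists_alternating (h : Admissible w) (h0 : ∀ k, charge w k = 0)
    (hno : ∀ k, w k = 1 → w (k + 1) ≠ 1) :
    ∃ k, w k = 1 ∧ w (k + 1) = 2 ∧ w (k + 2) = 1 ∧ w (k + 3) = 2 ∧ w (k + 4) = 1 ∧
      w (k + 5) = 2 ∧ w (k + 6) = 1 := by
  have hone_two : ∀ k, w k = 1 → w (k + 1) = 2 := fun k hk => by
    have := hno k hk
    have := h.one_le (k + 1)
    have := (h.of_charge_eq_zero (h0 (k + 1))).1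
    omega
  have htwo_one : ∀ k, w k = 2 → w (k + 1) = 1 := fun k hk => by
    have hprev := hno (k - 2)
    rw [show k - 2 + 1 = k - 1 by ring] at hprev
    have := (h.of_charge_eq_zero (h0 k)).2 hk
    omega
  obtain ⟨k, hk⟩ : ∃ k, w k = 1 := by
    by_cases hk : w 0 = 1
    · exact ⟨0, hk⟩
    · have := h.one_le 0
      have := (h.of_charge_eq_zero (h0 0)).1
      exact ⟨0 + 1, htwo_one 0 (by omega)⟩
  have h1 := hone_two k hk
  have h2 := htwo_one _ h1
  have h3 := hone_two _ h2
  have h4 := htwo_one _ h3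
  have h5 := hone_two _ h4
  have h6 := htwo_one _ h5
  simp only [add_assoc, Int.reduceAdd] at h2 h3 h4 h5 h6
  exact ⟨k, hk, h1, h2, h3, h4, h5, h6⟩

theorem IsPeriod.add_four_mul (h : Admissible w) (h0 : ∀ k, charge w k = 0) {k : ℤ}
    (hk : IsPeriod w k) (m : ℕ) : IsPeriod w (k + 4 * m) := by
  induction m with
  | zero => simpa using hk
  | succ m ih =>
    rw [Nat.cast_succ, mul_add, mul_one, ← add_assoc]
    exact h.isPeriod_add_four h0 ih

end Discharging

/-! ### The lower bound -/

section LowerBound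

variable {n : ℕ} {F : ℤ → Fin 4 → ℕ}

theorem Guarded.admissible (h : Guarded F) : Admissible fun k => weight (F k) where
  one_le := h.one_le_weight
  not_one_one_one k := by simpa [readFrom] using (h.reparam k 1).not_weight_one_one_one
  not_one_one_two_one k := by simpa [readFrom] using (h.reparam k 1).not_weight_one_one_two_one
  not_one_two_one_one k := fun ⟨h0, h1, h2, h3⟩ => by
    refine (h.reparam (k + 3) (-1)).not_weight_one_one_two_one ?_
    simp only [readFrom, Units.val_neg, Units.val_one, neg_one_mul, ← sub_eq_add_neg,
      add_sub_assoc]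
    norm_num [h0, h1, h2, h3]

theorem weight_periodic (hF : ∀ k x, F (k + n) x = F k (twist x)) :
    Function.Periodic (fun k => weight (F k)) n := fun k => by
  simp only [weight, hF]
  exact Equiv.sum_comp twist (F k)

theorem eq_one_of_twist_eq_self {x : Fin 4} (hx : x ≠ 0) (h : twist x = x) : x = 1 := by
  decide +revert

theorem eq_one_of_one_le_add (hF : ∀ k x, F (k + n) x = F k (twist x)) {k : ℤ} {x : Fin 4}
    (hx : x ≠ 0) (hw : weight (F k) = 1) (h : 1 ≤ F k x) (hn : 1 ≤ F (k + n) x) : x = 1 :=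
  eq_one_of_twist_eq_self hx (eq_of_weight_eq_one hw (hF k x ▸ hn) h)

theorem StronglyGuarded.not_isPeriod (h : StronglyGuarded F) (hn : Even n)
    (hF : ∀ k x, F (k + n) x = F k (twist x)) {k : ℤ}
    (hk : ∀ m : ℕ, IsPeriod (fun k => weight (F k)) (k + 4 * m)) : False := by
  obtain ⟨q, hq | hq⟩ : ∃ q, n = 4 * q ∨ n = 4 * q + 2 := ⟨n / 4, by grind⟩
  · obtain ⟨s, hs, p, hp, hps, hrows⟩ := (h.reparam k 1).rows_of_weight_periodic fun m => by
      simpa [readFrom, IsPeriod, add_assoc] using hk m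
    have h1 := hk 1
    have hrows0 := hrows 0
    have hrowsq := hrows q
    push_cast [readFrom, mul_add] at hrows0 hrowsq h1
    refine hps <| (eq_one_of_one_le_add hF hp h1.2.1 ?_ ?_).trans
      (eq_one_of_one_le_add hF hs h1.1 ?_ ?_).symm
    all_goals push_cast [hq]; grind
  · have h2 := (hk q).2.2.1
    have h0 := weight_periodic hF k
    have hk0 := (hk 0).1
    push_cast [hq] at h0
    simp only [Nat.cast_zero, mul_zero, add_zero] at hk0
    simp only [add_assoc] at h0 h2
    omega

theorem StronglyGuarded.three_mul_lt (h : StronglyGuarded F) [NeZero n]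
    (hF : ∀ k x, F (k + n) x = F k (twist x)) :
    3 * n < 2 * ∑ k ∈ Finset.range n, weight (F k) := by
  have hadm := h.guarded.admissible
  have hper := weight_periodic hF
  refine (hadm.three_mul_le_two_mul_sum hper).lt_of_ne fun heq => ?_
  have h0 := hadm.charge_eq_zero hper heq.symm
  by_cases hno : ∀ k, weight (F k) = 1 → weight (F (k + 1)) ≠ 1
  · obtain ⟨k, hk⟩ := hadm.exists_alternating h0 hno
    exact (h.reparam k 1).not_weight_alternating (by simpa [readFrom] using hk)
  · push Not at hno
    obtain ⟨k, hk0, hk1⟩ := hno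
    exact h.not_isPeriod (by grind) hF ((hadm.isPeriod_of_one_one h0 hk0 hk1).add_four_mul hadm h0)

end LowerBound

/-! ### Lifting guard functions to the strip -/

section Lift

variable {n : ℕ} [NeZero n] {f : FV n → ℕ} {k : ℤ} {x : Fin 4} {ε : ℤˣ}

/-- The lift of a guard function on `J_n` to the strip covering it. -/
def lift (f : FV n → ℕ) (k : ℤ) (x : Fin 4) : ℕ := f (cover n k x)

theorem lift_add_mul (f : FV n → ℕ) (k m : ℤ) (x : Fin 4) :
    lift f (k + n * m) x = lift f k ((twist ^ m) x) :=
  congrArg f (cover_add_mul k m x)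

theorem lift_add_natCast (f : FV n → ℕ) (k : ℤ) (x : Fin 4) :
    lift f (k + n) x = lift f k (twist x) := by
  simpa using lift_add_mul f k 1 x

theorem sum_weight_lift (f : FV n → ℕ) :
    ∑ k ∈ Finset.range n, weight (lift f k) = ∑ v, f v := by
  rw [Fintype.sum_prod_type, Finset.sum_range]
  simp only [weight, lift, cover_natCast]

theorem two_le_weight_iff {g : Fin 4 → ℕ} (hx : 1 ≤ g x) :
    2 ≤ weight g ↔ 2 ≤ g x ∨ ∃ y ≠ x, 1 ≤ g y := by
  constructor
  · intro h
    by_contra! hg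
    rw [weight, Finset.sum_eq_single x (fun y _ hy => Nat.lt_one_iff.1 (hg.2 y hy)) (by simp)] at h
    exact h.not_gt hg.1
  · rintro (h | ⟨y, hyx, hy⟩)
    · exact h.trans (le_weight g x)
    · have := add_le_weight g hyx
      omega

theorem cover_ne_cover {l : ℤ} {y : Fin 4} (hkl : |k - l| < n) (hne : k ≠ l ∨ x ≠ y) :
    cover n k x ≠ cover n l y := by
  rw [Ne, cover_inj hkl]
  tauto

theorem abs_add_mul_unit_sub (k m : ℤ) (ε : ℤˣ) : |k + m * ε - k| = |m| := by
  rw [add_sub_cancel_left, abs_mul, Int.isUnit_iff_abs_eq.1 ε.isUnit, mul_one]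

theorem abs_add_unit_sub (k : ℤ) (ε : ℤˣ) : |k + ε - k| = 1 := by
  simpa using abs_add_mul_unit_sub k 1 ε

theorem Defends.hubDefends (hn : 3 ≤ n) (hx : x ≠ 0)
    (h : Defends f (cover n k 0) (cover n k x)) : HubDefends (lift f) k x := by
  obtain ⟨-, hf, hdef⟩ := h
  refine ⟨hf, or_iff_not_imp_left.2 fun hhub y hy hyx => ?_⟩
  obtain ⟨z, hz, hmove⟩ := hdef (cover n k y) (adj_cover_hub_iff.2 ⟨y, hy, rfl⟩)
  have hcol : ∀ l, |l - k| < n → 1 ≤ moveGuard f (cover n k 0) (cover n k x) (cover n l y) →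
      1 ≤ lift f l y := fun l hl hmove => by
    rcases one_le_moveGuard_iff.1 hmove with heq | ⟨heq, -⟩ | ⟨-, hone⟩
    · exact absurd heq (cover_ne_cover hl (Or.inr hyx))
    · exact absurd heq (cover_ne_cover hl (Or.inr hy))
    · exact hone
  rw [adj_cover_row_iff hn hy 1, Units.val_one] at hz
  rcases hz with rfl | rfl | rfl | rfl
  · exact Or.inl (hcol k (abs_lt.2 (by omega)) hmove)
  · rcases one_le_moveGuard_iff.1 hmove with heq | ⟨-, htwo⟩ | ⟨hne, -⟩
    · exact absurd heq (cover_ne_cover (abs_lt.2 (by omega)) (Or.inr hx.symm))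
    · exact absurd htwo hhub
    · exact absurd rfl hne
  · exact Or.inr (Or.inl (hcol (k - 1) (abs_lt.2 (by omega)) hmove))
  · exact Or.inr (Or.inr (hcol (k + 1) (abs_lt.2 (by omega)) hmove))

theorem Defends.rowDefends (hn : 3 ≤ n) (hx : x ≠ 0)
    (h : Defends f (cover n (k + ε) x) (cover n k x)) : RowDefends (lift f) k x ε := by
  obtain ⟨-, hf, hdef⟩ := h
  refine ⟨hf, (two_le_weight_iff hf).2 ?_⟩
  obtain ⟨z, hz, hmove⟩ := hdef (cover n (k + ε) 0) ((adj_cover_hub_iff.2 ⟨x, hx, rfl⟩).symm)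
  obtain ⟨y, rfl⟩ : ∃ y, z = cover n (k + ε) y := by
    rcases hz with rfl | hz
    · exact ⟨0, rfl⟩
    · obtain ⟨y, -, rfl⟩ := adj_cover_hub_iff.1 hz
      exact ⟨y, rfl⟩
  rcases one_le_moveGuard_iff.1 hmove with heq | ⟨-, htwo⟩ | ⟨hne, hone⟩
  · exact absurd heq (cover_ne_cover (by rw [abs_add_unit_sub]; omega) (Or.inl (by simp)))
  · exact Or.inl htwo
  · exact Or.inr ⟨y, fun hyx => hne (by rw [hyx]), hone⟩

theorem Defends.rowCovered (hn : 4 ≤ n) (hx : x ≠ 0)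
    (h : Defends f (cover n (k + ε) x) (cover n k x)) : RowCovered (lift f) k x ε := by
  obtain ⟨-, -, hdef⟩ := h
  have hadj : (flowerSnark n).Adj (cover n (k + ε) x) (cover n (k + 2 * ε) x) :=
    (adj_cover_row_iff (by omega) hx ε).2 (Or.inr (Or.inr (by ring_nf)))
  obtain ⟨z, hz, hmove⟩ := hdef _ hadj
  rw [adj_cover_row_iff (by omega) hx ε, show k + 2 * ε - ε = k + ε by ring,
    show k + 2 * ε + ε = k + 3 * ε by ring] at hz
  have hcol : ∀ m : ℤ, |m| < n → ∀ y, m ≠ 0 ∨ y ≠ x →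
      1 ≤ moveGuard f (cover n (k + ε) x) (cover n k x) (cover n (k + m * ε) y) →
      2 ≤ f (cover n (k + ε) x) ∨ 1 ≤ f (cover n (k + m * ε) y) := fun m hm y hne hmove => by
    rcases one_le_moveGuard_iff.1 hmove with heq | ⟨-, htwo⟩ | ⟨-, hone⟩
    · exact absurd heq (cover_ne_cover (by rwa [abs_add_mul_unit_sub]) (by simpa using hne))
    · exact Or.inl htwo
    · exact Or.inr hone
  rcases hz with rfl | rfl | rfl | rfl
  · exact (hcol 2 (abs_lt.2 (by omega)) x (by simp) hmove).imp_right fun h => Or.inr (Or.inl h)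
  · exact (hcol 2 (abs_lt.2 (by omega)) 0 (by simp) hmove).imp_right Or.inl
  · rcases one_le_moveGuard_iff.1 hmove with heq | ⟨-, htwo⟩ | ⟨hne, -⟩
    · exact absurd heq (cover_ne_cover (by rw [abs_add_unit_sub]; omega) (Or.inl (by simp)))
    · exact Or.inl htwo
    · exact absurd rfl hne
  · exact (hcol 3 (abs_lt.2 (by omega)) x (by simp) hmove).imp_right fun h => Or.inr (Or.inr h)

theorem Defends.eq_hub_or_row (hn : 3 ≤ n) (hx : x ≠ 0) {w : FV n}
    (h : Defends f w (cover n k x)) : w = cover n k 0 ∨ ∃ ε : ℤˣ, w = cover n (k + ε) x := by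
  rcases (adj_cover_row_iff hn hx 1).1 h.1 with rfl | rfl | rfl
  · exact Or.inl rfl
  · exact Or.inr ⟨-1, by simp [sub_eq_add_neg]⟩
  · exact Or.inr ⟨1, rfl⟩

theorem one_le_weight_lift (h : WeakRomanDominating n f) (k : ℤ) :
    1 ≤ weight (lift f k) := by
  by_cases hhub : f (cover n k 0) = 0
  · obtain ⟨w, hadj, hw, -⟩ := (weakRomanDominating_iff.1 h).2 _ hhub
    obtain ⟨x, -, rfl⟩ := adj_cover_hub_iff.1 hadj
    exact hw.trans (le_weight (lift f k) x)
  · exact (Nat.one_le_iff_ne_zero.2 hhub).trans (le_weight (lift f k) 0)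

theorem guarded_lift (h : WeakRomanDominating n f) (hn : 3 ≤ n) :
    Guarded (lift f) where
  one_le_weight := one_le_weight_lift h
  defended k x hx hx0 := by
    obtain ⟨w, hw⟩ := (weakRomanDominating_iff.1 h).2 _ hx0
    rcases hw.eq_hub_or_row hn hx with rfl | ⟨ε, rfl⟩
    · exact Or.inl (hw.hubDefends hn hx)
    · exact Or.inr ⟨ε, hw.rowDefends hn hx⟩

theorem stronglyGuarded_lift (h : WeakRomanDominating n f) (hn : 4 ≤ n) :
    StronglyGuarded (lift f) where
  one_le_weight := one_le_weight_lift h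
  defended k x hx hx0 := by
    obtain ⟨w, hw⟩ := (weakRomanDominating_iff.1 h).2 _ hx0
    rcases hw.eq_hub_or_row (by omega) hx with rfl | ⟨ε, rfl⟩
    · exact Or.inl (hw.hubDefends (by omega) hx)
    · exact Or.inr ⟨ε, hw.rowDefends (by omega) hx, hw.rowCovered hn hx⟩

theorem three_mul_add_one_le (hn : 3 ≤ n) (h : WeakRomanDominating n f) :
    3 * n + 1 ≤ 2 * ∑ v, f v := by
  have hle := (guarded_lift h hn).admissible.three_mul_le_two_mul_sum
    (weight_periodic (lift_add_natCast f))
  rw [sum_weight_lift] at hle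
  refine hle.lt_of_ne fun heq => ?_
  have hlt := (stronglyGuarded_lift h (by omega)).three_mul_lt (lift_add_natCast f)
  rw [sum_weight_lift] at hlt
  omega

end Lift

/-! ### A guard function of weight `⌊(3n + 2) / 2⌋` -/

section Construction

variable {n : ℕ} [NeZero n] {f : FV n → ℕ} {k : ℤ} {x : Fin 4} {ε : ℤˣ}

theorem one_le_moveGuard_cover {v : FV n} {l : ℤ} {y : Fin 4} (hlk : |l - k| < n)
    (hne : l ≠ k ∨ y ≠ x) (hy : 1 ≤ lift f l y) : 1 ≤ moveGuard f (cover n k x) v (cover n l y) :=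
  one_le_moveGuard_iff.2 (Or.inr (Or.inr ⟨cover_ne_cover hlk hne, hy⟩))

theorem defends_hub (hn : 3 ≤ n) (hx : x ≠ 0) (hf : 1 ≤ lift f k x)
    (hnear : ∀ ε : ℤˣ, 1 ≤ lift f (k + ε) x ∨ 1 ≤ lift f (k + 2 * ε) x) :
    Defends f (cover n k x) (cover n k 0) := by
  refine ⟨adj_cover_hub_iff.2 ⟨x, hx, rfl⟩, hf, fun u hu => ?_⟩
  have hrow : u = cover n k 0 ∨ ∃ ε : ℤˣ, u = cover n (k + ε) x :=
    ((adj_cover_row_iff hn hx 1).1 hu).imp_right <| Or.rec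
      (fun h => ⟨-1, by simpa [sub_eq_add_neg] using h⟩) (fun h => ⟨1, h⟩)
  rcases hrow with rfl | ⟨ε, rfl⟩
  · exact ⟨_, Or.inl rfl, one_le_moveGuard_iff.2 (Or.inl rfl)⟩
  · rcases hnear ε with h | h
    · exact ⟨_, Or.inl rfl, one_le_moveGuard_cover (by rw [abs_add_unit_sub]; omega)
        (Or.inl (by simp)) h⟩
    · exact ⟨_, Or.inr ((adj_cover_row_iff hn hx ε).2 (Or.inr (Or.inr (by ring_nf)))),
        one_le_moveGuard_cover (by rw [abs_add_mul_unit_sub]; exact abs_lt.2 (by omega))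
          (Or.inl (by simp)) h⟩

theorem defends_row (hn : 3 ≤ n) (hx : x ≠ 0) (hrow : RowDefends (lift f) k x ε)
    (hcov : RowCovered (lift f) k x ε) : Defends f (cover n (k + ε) x) (cover n k x) := by
  refine ⟨(adj_cover_row_iff hn hx ε).2 (Or.inr (Or.inr rfl)), hrow.1, fun u hu => ?_⟩
  have hself (h : 2 ≤ lift f (k + ε) x) :
      1 ≤ moveGuard f (cover n (k + ε) x) (cover n k x) (cover n (k + ε) x) :=
    one_le_moveGuard_iff.2 (Or.inr (Or.inl ⟨rfl, h⟩))
  have hcol2 : k + 2 * (ε : ℤ) = k + ε + ε := by ring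
  have hcol3 : k + 3 * (ε : ℤ) = k + ε + 2 * ε := by ring
  rw [RowCovered, hcol2, hcol3] at hcov
  rw [adj_cover_row_iff hn hx ε, add_sub_cancel_right] at hu
  rcases hu with rfl | rfl | rfl
  · rcases (two_le_weight_iff hrow.1).1 hrow.2 with h | ⟨y, hyx, hy⟩
    · exact ⟨_, Or.inr (adj_cover_hub_iff.2 ⟨x, hx, rfl⟩), hself h⟩
    · refine ⟨cover n (k + ε) y, ?_, one_le_moveGuard_cover (abs_lt.2 (by omega)) (Or.inr hyx) hy⟩
      exact (eq_or_ne y 0).imp (congrArg _) fun hy0 => adj_cover_hub_iff.2 ⟨y, hy0, rfl⟩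
  · exact ⟨_, Or.inl rfl, one_le_moveGuard_iff.2 (Or.inl rfl)⟩
  · have habs : |k + ε + ε - (k + ε)| < (n : ℤ) := by rw [abs_add_unit_sub]; omega
    simp only [adj_cover_row_iff hn hx ε]
    rcases hcov with h | h | h | h
    · exact ⟨_, Or.inr (Or.inr (Or.inl (by rw [add_sub_cancel_right]))), hself h⟩
    · exact ⟨_, Or.inr (Or.inl rfl), one_le_moveGuard_cover habs (Or.inr hx.symm) h⟩
    · exact ⟨_, Or.inl rfl, one_le_moveGuard_cover habs (Or.inl (by simp)) h⟩
    · exact ⟨_, Or.inr (Or.inr (Or.inr (by ring_nf))), one_le_moveGuard_cover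
        (by rw [abs_add_mul_unit_sub]; exact abs_lt.2 (by omega)) (Or.inl (by simp)) h⟩

/-- The guards of an optimal weak Roman dominating function on `J_n` in the copy `i`: the rows `c`
and `d` are guarded alternately, the row `b` in every other pair of copies, and `c` takes the place
of `b` in the last copy. -/
def optimalColumn (n i : ℕ) : Fin 4 → ℕ :=
  ![0, if i % 4 = 0 ∨ (i % 4 = 1 ∧ i ≠ n - 1) then 1 else 0,
    if i % 2 = 0 ∨ i = n - 1 then 1 else 0, if i % 2 = 1 then 1 else 0]

/-- An optimal weak Roman dominating function on `J_n`. -/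
def optimalGuards (n : ℕ) (v : FV n) : ℕ := optimalColumn n v.1 v.2

theorem sum_range_ite_mod_four (m : ℕ) :
    ∑ i ∈ Finset.range m, (if i % 4 < 2 then 2 else 1) = m + 2 * (m / 4) + min (m % 4) 2 := by
  induction m with
  | zero => rfl
  | succ m ih => rw [Finset.sum_range_succ, ih]; split_ifs <;> omega

theorem weight_optimalColumn (n i : ℕ) : weight (optimalColumn n i) =
    if i % 4 < 2 ∨ (i % 4 = 3 ∧ i = n - 1) then 2 else 1 := by
  simp only [weight, optimalColumn, Fin.sum_univ_four, Matrix.cons_val]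
  split_ifs <;> omega

theorem two_mul_sum_optimalGuards_le (n : ℕ) : 2 * ∑ v, optimalGuards n v ≤ 3 * n + 2 := by
  obtain rfl | ⟨m, rfl⟩ : n = 0 ∨ ∃ m, n = m + 1 := by cases n <;> simp
  · simp
  · have hsum : ∑ v, optimalGuards (m + 1) v =
        ∑ i ∈ Finset.range (m + 1), weight (optimalColumn (m + 1) i) := by
      rw [Fintype.sum_prod_type, Finset.sum_range]
      rfl
    have hinit : ∀ i ∈ Finset.range m,
        weight (optimalColumn (m + 1) i) = if i % 4 < 2 then 2 else 1 := fun i hi => by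
      have := Finset.mem_range.1 hi
      rw [weight_optimalColumn]
      congr 1
      simp only [eq_iff_iff]
      omega
    rw [hsum, Finset.sum_range_succ, Finset.sum_congr rfl hinit, sum_range_ite_mod_four,
      weight_optimalColumn]
    split_ifs <;> omega

theorem lift_optimalGuards {i : ℕ} (hi : i < n) (x : Fin 4) :
    lift (optimalGuards n) i x = optimalColumn n i x :=
  congrArg (optimalGuards n) (cover_natCast ⟨i, hi⟩ x)

theorem one_le_lift_optimalGuards_or_succ (k : ℤ) (hx0 : x ≠ 0) (hx1 : x ≠ 1) :
    1 ≤ lift (optimalGuards n) k x ∨ 1 ≤ lift (optimalGuards n) (k + 1) x := by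
  obtain ⟨i, m, rfl⟩ := exists_eq_natCast_add_mul n k
  rw [add_right_comm, lift_add_mul, lift_add_mul, lift_optimalGuards i.2]
  have hy : (twist ^ m) x = 2 ∨ (twist ^ m) x = 3 := by
    have hy0 := mt (twist_zpow_eq_iff m (by decide)).1 hx0
    have hy1 := mt (twist_zpow_eq_iff m (by decide)).1 hx1
    omega
  have hnext : ((i : ℕ) : ℤ) + 1 = (i + 1 : ℕ) := by push_cast; rfl
  rcases Nat.lt_or_ge (i + 1) n with h | h
  · rw [hnext, lift_optimalGuards h]
    rcases hy with hy | hy <;> simp only [hy, optimalColumn, Matrix.cons_val] <;>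
      split_ifs <;> omega
  · have hlast : ((i : ℕ) : ℤ) + 1 = (0 : ℕ) + n := by have := i.2; omega
    rw [hlast, lift_add_natCast, lift_optimalGuards (NeZero.pos n)]
    rcases hy with hy | hy
    · rw [hy]
      exact Or.inl (if_pos (Or.inr (by omega))).ge
    · rw [hy]
      exact Or.inr (by simp [optimalColumn, twist])

theorem one_le_lift_optimalGuards_or (k : ℤ) (ε : ℤˣ) (hx0 : x ≠ 0) (hx1 : x ≠ 1) :
    1 ≤ lift (optimalGuards n) k x ∨ 1 ≤ lift (optimalGuards n) (k + ε) x := by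
  rcases Int.units_eq_one_or ε with rfl | rfl
  · exact one_le_lift_optimalGuards_or_succ k hx0 hx1
  · simpa [← sub_eq_add_neg, or_comm] using
      one_le_lift_optimalGuards_or_succ (n := n) (k - 1) hx0 hx1

theorem two_le_weight_lift_optimalGuards {i : ℕ}
    (hi : i < n ∧ (i % 4 < 2 ∨ i % 4 = 3 ∧ i = n - 1) ∨ i = n) :
    2 ≤ weight (lift (optimalGuards n) i) := by
  rcases hi with ⟨hi, hmod⟩ | rfl
  · rw [funext (lift_optimalGuards hi), weight_optimalColumn, if_pos hmod]
  · have hwrap : weight (lift (optimalGuards i) ((0 : ℕ) + i)) =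
        weight (lift (optimalGuards i) (0 : ℕ)) := weight_periodic (lift_add_natCast _) _
    rw [← zero_add (i : ℤ), ← Nat.cast_zero, hwrap, funext (lift_optimalGuards (NeZero.pos i)),
      weight_optimalColumn, if_pos (by simp)]

theorem one_le_lift_optimalGuards_one (hn : 3 ≤ n) {i : ℕ}
    (hi : i < n ∧ (i % 4 = 0 ∨ i % 4 = 1 ∧ i ≠ n - 1) ∨ i = n ∨ i = n + 1) :
    1 ≤ lift (optimalGuards n) i 1 := by
  obtain ⟨hi, hmod⟩ | ⟨j, hj, rfl⟩ : i < n ∧ (i % 4 = 0 ∨ i % 4 = 1 ∧ i ≠ n - 1) ∨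
      ∃ j < 2, i = j + n :=
    hi.imp_right (Or.rec (fun h => ⟨0, by omega⟩) fun h => ⟨1, by omega⟩)
  · rw [lift_optimalGuards hi]
    exact (if_pos hmod).ge
  · rw [Nat.cast_add, lift_add_natCast, lift_optimalGuards (hj.trans (by omega))]
    exact (if_pos (by omega)).ge

theorem exists_two_le_weight_lift_optimalGuards (i : Fin n) :
    ∃ ε : ℤˣ, 2 ≤ weight (lift (optimalGuards n) ((i : ℕ) + ε)) := by
  have hi := i.2
  by_cases hmod : (i : ℕ) % 4 = 1 ∨ (i : ℕ) % 4 = 2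
  · have hcol : ((i : ℕ) : ℤ) + (-1 : ℤˣ) = (i - 1 : ℕ) := by
      rw [Units.val_neg, Units.val_one]; omega
    exact ⟨-1, hcol ▸ two_le_weight_lift_optimalGuards (by omega)⟩
  · have hcol : ((i : ℕ) : ℤ) + (1 : ℤˣ) = (i + 1 : ℕ) := by simp
    exact ⟨1, hcol ▸ two_le_weight_lift_optimalGuards (by omega)⟩

theorem exists_rowDefends_optimalGuards_one (hn : 3 ≤ n) (i : Fin n)
    (h0 : optimalGuards n (i, 1) = 0) : ∃ ε, RowDefends (lift (optimalGuards n)) (i : ℕ) 1 ε ∧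
      RowCovered (lift (optimalGuards n)) (i : ℕ) 1 ε := by
  have hi := i.2
  have hmod : ¬ ((i : ℕ) % 4 = 0 ∨ (i : ℕ) % 4 = 1 ∧ (i : ℕ) ≠ n - 1) := fun h =>
    absurd h0 ((if_pos h).trans_ne one_ne_zero)
  by_cases h2 : (i : ℕ) % 4 = 2
  · have hcol : ((i : ℕ) : ℤ) + (-1 : ℤˣ) = (i - 1 : ℕ) := by
      rw [Units.val_neg, Units.val_one]; omega
    have hcol2 : ((i : ℕ) : ℤ) + 2 * (-1 : ℤˣ) = (i - 2 : ℕ) := by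
      rw [Units.val_neg, Units.val_one]; omega
    refine ⟨-1, ⟨hcol ▸ one_le_lift_optimalGuards_one hn (by omega),
      hcol ▸ two_le_weight_lift_optimalGuards (by omega)⟩, Or.inr (Or.inr (Or.inl ?_))⟩
    exact hcol2 ▸ one_le_lift_optimalGuards_one hn (by omega)
  · have hcol : ∀ m : ℕ, ((i : ℕ) : ℤ) + m * (1 : ℤˣ) = (i + m : ℕ) := by simp
    have hcol1 : ((i : ℕ) : ℤ) + (1 : ℤˣ) = (i + 1 : ℕ) := by simp
    refine ⟨1, ⟨hcol1 ▸ one_le_lift_optimalGuards_one hn (by omega),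
      hcol1 ▸ two_le_weight_lift_optimalGuards (by omega)⟩, Or.inr (Or.inr ?_)⟩
    by_cases hlast : (i : ℕ) + 3 = n
    · exact Or.inr (hcol 3 ▸ one_le_lift_optimalGuards_one hn (by omega))
    · exact Or.inl (hcol 2 ▸ one_le_lift_optimalGuards_one hn (by omega))

theorem weakRomanDominating_optimalGuards (hn : 3 ≤ n) :
    WeakRomanDominating n (optimalGuards n) := by
  refine weakRomanDominating_iff.2 ⟨fun ⟨i, x⟩ => ?_, fun ⟨i, x⟩ h0 => ?_⟩
  · have hx : x = 0 ∨ x = 1 ∨ x = 2 ∨ x = 3 := by omega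
    rcases hx with rfl | rfl | rfl | rfl
    · exact Nat.zero_le 2
    all_goals simp only [optimalGuards, optimalColumn, Matrix.cons_val]; split_ifs <;> omega
  rw [← cover_natCast]
  rcases eq_or_ne x 0 with rfl | hx0
  · obtain ⟨y, hy0, hy1, hy⟩ : ∃ y, y ≠ 0 ∧ y ≠ 1 ∧ 1 ≤ lift (optimalGuards n) (i : ℕ) y := by
      simp only [lift_optimalGuards i.2]
      rcases Nat.mod_two_eq_zero_or_one i with h | h
      · exact ⟨2, by decide, by decide, (if_pos (Or.inl h)).ge⟩
      · exact ⟨3, by decide, by decide, (if_pos h).ge⟩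
    refine ⟨_, defends_hub hn hy0 hy fun ε => ?_⟩
    rw [two_mul, ← add_assoc]
    exact one_le_lift_optimalGuards_or _ ε hy0 hy1
  rcases eq_or_ne x 1 with rfl | hx1
  · obtain ⟨ε, hrow, hcov⟩ := exists_rowDefends_optimalGuards_one hn i h0
    exact ⟨_, defends_row hn hx0 hrow hcov⟩
  · obtain ⟨ε, hε⟩ := exists_two_le_weight_lift_optimalGuards i
    have hnear : 1 ≤ lift (optimalGuards n) ((i : ℕ) + ε) x :=
      (one_le_lift_optimalGuards_or (i : ℕ) ε hx0 hx1).resolve_left <| by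
        rw [lift, cover_natCast, h0]; omega
    refine ⟨_, defends_row hn hx0 ⟨hnear, hε⟩ (Or.inr (Or.inr ?_))⟩
    convert one_le_lift_optimalGuards_or (n := n) ((i : ℕ) + 2 * ε) ε hx0 hx1 using 3
    ring

end Construction

theorem weakRomanDominationNumber_eq {n : ℕ} (hn : 3 ≤ n) :
    weakRomanDominationNumber n = (3 * n + 2) / 2 := by
  have : NeZero n := ⟨by omega⟩
  have hopt : ∑ v, optimalGuards n v ∈
      {k | ∃ f : FV n → ℕ, WeakRomanDominating n f ∧ ∑ v, f v = k} :=
    ⟨_, weakRomanDominating_optimalGuards hn, rfl⟩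
  apply le_antisymm
  · have := two_mul_sum_optimalGuards_le n
    exact (Nat.sInf_le hopt).trans (by omega)
  · refine le_csInf ⟨_, hopt⟩ ?_
    rintro _ ⟨f, hf, rfl⟩
    have := three_mul_add_one_le hn hf
    omega

end FlowerSnark

/-- For every `n ≥ 3`, the weak Roman domination number of the flower snark
`J_n` equals `⌈(3n+1)/2⌉`. -/
theorem flowerSnark_weakRomanDomination (n : ℕ) (hn : 3 ≤ n) :
    (weakRomanDominationNumber n : ℤ) = ⌈(3 * (n : ℚ) + 1) / 2⌉ := by
  have hceil : ⌈(3 * (n : ℚ) + 1) / 2⌉ = -(-(3 * n + 1 : ℤ) / 2) := by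
    exact_mod_cast Rat.ceil_natCast_div_natCast (3 * n + 1) 2
  rw [hceil, FlowerSnark.weakRomanDominationNumber_eq hn]
  omega
end

section
/- Let n ≥ 3 and let S be a minimal dominating set of the flower snark J_n. Then for every i, the weight of the copy J^i in S (i.e. |S ∩ {a^i, b^i, c^i, d^i}|) is 1, 2, or 3. -/
/-!
The closed neighbourhood `N[v]` of a non-isolated vertex `v` meets every dominating set `S`, because
`v` is dominated. If moreover `N[v] ⊆ S`, then `S` is not minimal: `v` dominates only vertices of
`N[v]`, so nothing outside `S` needs it, and `v` itself is dominated by any of its neighbours.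
Hence `1 ≤ |S ∩ N[v]| ≤ deg v` for minimal `S`, and the copy `J^i` is the closed neighbourhood of
the cubic vertex `a^i`.
-/

section DominatingSets

variable {V : Type*} {G : SimpleGraph V} {S : Set V} {v : V}

/-- `S` is a dominating set of an arbitrary simple graph `G`. It is phrased so that `Dominating n`
is definitionally the case `G = flowerSnark n`. -/
def IsDominatingSet (G : SimpleGraph V) (S : Set V) : Prop :=
  ∀ v ∉ S, ∃ w ∈ S, G.Adj v w

theorem IsDominatingSet.inter_insert_neighborSet_nonempty (hS : IsDominatingSet G S) (v : V) :
    (S ∩ insert v (G.neighborSet v)).Nonempty := by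
  by_cases hv : v ∈ S
  · exact ⟨v, hv, Set.mem_insert v _⟩
  · obtain ⟨w, hw, hadj⟩ := hS v hv
    exact ⟨w, hw, Set.mem_insert_of_mem v hadj⟩

theorem IsDominatingSet.sdiff_singleton (hS : IsDominatingSet G S)
    (hv : (G.neighborSet v).Nonempty) (hsub : G.neighborSet v ⊆ S) :
    IsDominatingSet G (S \ {v}) := by
  intro u hu
  obtain rfl | huv := eq_or_ne u v
  · obtain ⟨w, hw⟩ := hv
    exact ⟨w, ⟨hsub hw, hw.ne'⟩, hw⟩
  · have huS : u ∉ S := fun h => hu ⟨h, huv⟩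
    obtain ⟨w, hw, hadj⟩ := hS u huS
    have hwv : w ≠ v := by
      rintro rfl
      exact huS (hsub hadj.symm)
    exact ⟨w, ⟨hw, hwv⟩, hadj⟩

theorem not_insert_neighborSet_subset_of_minimal (hS : Minimal (IsDominatingSet G) S)
    (hv : (G.neighborSet v).Nonempty) : ¬ insert v (G.neighborSet v) ⊆ S := by
  intro hsub
  obtain ⟨hvS, hNS⟩ := Set.insert_subset_iff.mp hsub
  exact hS.not_prop_of_ssubset (Set.sdiff_singleton_ssubset.mpr hvS)
    (hS.prop.sdiff_singleton hv hNS)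

theorem ncard_inter_insert_neighborSet_mem_Icc (hS : Minimal (IsDominatingSet G) S)
    (hv : (G.neighborSet v).Nonempty) (hfin : (G.neighborSet v).Finite) :
    (S ∩ insert v (G.neighborSet v)).ncard ∈ Set.Icc 1 (G.neighborSet v).ncard := by
  have hfin' : (insert v (G.neighborSet v)).Finite := hfin.insert v
  have hssub : S ∩ insert v (G.neighborSet v) ⊂ insert v (G.neighborSet v) :=
    Set.inter_ssubset_right_iff.mpr (not_insert_neighborSet_subset_of_minimal hS hv)
  constructor
  · exact (Set.ncard_pos (hfin'.inter_of_right S)).mpr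
      (hS.prop.inter_insert_neighborSet_nonempty v)
  · refine Nat.le_of_lt_succ ?_
    calc (S ∩ insert v (G.neighborSet v)).ncard
        < (insert v (G.neighborSet v)).ncard := Set.ncard_lt_ncard hssub hfin'
      _ ≤ (G.neighborSet v).ncard + 1 := Set.ncard_insert_le v _

end DominatingSets

section FlowerSnark

variable {n : ℕ}

theorem minimalDominating_iff_minimal {S : Set (FV n)} :
    MinimalDominating n S ↔ Minimal (IsDominatingSet (flowerSnark n)) S :=
  Set.minimal_iff_forall_ssubset.symm

theorem neighborSet_flowerSnark_zero (i : Fin n) :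
    (flowerSnark n).neighborSet (i, 0) = {i} ×ˢ {0}ᶜ := by
  ext ⟨j, k⟩
  simp only [flowerSnark, SimpleGraph.mem_neighborSet, SimpleGraph.fromRel_adj, Set.mem_prod,
    Set.mem_singleton_iff, Set.mem_compl_iff]
  grind

theorem ncard_neighborSet_flowerSnark_zero (i : Fin n) :
    ((flowerSnark n).neighborSet (i, 0)).ncard = 3 := by
  simp [neighborSet_flowerSnark_zero, Set.ncard_prod, Set.ncard_compl {(0 : Fin 4)}]

theorem insert_neighborSet_flowerSnark_zero (i : Fin n) :
    insert (i, 0) ((flowerSnark n).neighborSet (i, 0)) = {v : FV n | v.1 = i} := by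
  ext ⟨j, k⟩
  simp only [neighborSet_flowerSnark_zero, Set.mem_insert_iff, Set.mem_prod, Prod.mk.injEq,
    Set.mem_singleton_iff, Set.mem_compl_iff, Set.mem_ofPred_eq]
  tauto

theorem copyWeight_val (S : Set (FV n)) (i : Fin n) :
    copyWeight S (i : ℕ) = (S ∩ {v : FV n | v.1 = i}).ncard := by
  simp only [copyWeight, Nat.mod_eq_of_lt i.isLt, Fin.ext_iff]

end FlowerSnark

/-- If `n ≥ 3` and `S` is a minimal dominating set of the flower snark `J_n`,
then every copy `J^i` has weight 1, 2 or 3 in `S`. -/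
theorem flowerSnark_minimalDominating_copyWeight (n : ℕ) (hn : 3 ≤ n)
    (S : Set (FV n)) (hS : MinimalDominating n S) :
    ∀ i : Fin n, copyWeight S (i : ℕ) = 1 ∨ copyWeight S (i : ℕ) = 2 ∨
      copyWeight S (i : ℕ) = 3 := by
  intro i
  have hmin := minimalDominating_iff_minimal.mp hS
  have hcard := ncard_neighborSet_flowerSnark_zero i
  have hne : ((flowerSnark n).neighborSet (i, 0)).Nonempty :=
    Set.nonempty_of_ncard_ne_zero (by simp [hcard])
  have hmem := ncard_inter_insert_neighborSet_mem_Icc hmin hne (Set.toFinite _)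
  rw [hcard, insert_neighborSet_flowerSnark_zero, ← copyWeight_val] at hmem
  obtain ⟨hpos, hle⟩ := hmem
  omega
end

section
/- Let n ≥ 4 and let S be a minimal dominating set of the flower snark J_n. Let w₁ denote the number of copies J^i having weight 1 in S and w₃ the number of copies having weight 3 in S. Then w₁ ≥ w₃, and w₁ = w₃ holds if and only if w₁ = w₃ = n/2. -/
/-!
Unrolling `J_n` gives a two-way infinite ladder of claws in which the twist between `c` and `d` has
disappeared. For `n ≥ 3` the covering map is bijective on closed neighbourhoods, so a minimal
dominating set pulls back to a dominating set of the ladder in which every vertex has a private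
neighbour. Locating the private neighbours shows that every copy has weight at most `3`, that both
neighbours of a copy of weight `3` have weight `1`, and that not all weights equal `2`. Hence the
rotation by one copy injects the set `A` of copies of weight `3` into the set `B` of copies of
weight `1`. If `|A| = |B|`, then the rotation carries `A` onto `B` and `B` onto `A`; since it is
transitive and `A ∪ B` is nonempty, `A ∪ B` consists of all copies and `|A| = |B| = n / 2`.
-/

section General
variable {V W : Type*} {G : SimpleGraph V} {H : SimpleGraph W}

/-- The closed neighbourhood `N[v]` of a vertex. -/
def closedNbhd (G : SimpleGraph V) (v : V) : Set V := insert v (G.neighborSet v)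

/-- `S` is a dominating set of `G`, expressed as: `S` meets every closed neighbourhood. -/
def IsDominating (G : SimpleGraph V) (S : Set V) : Prop :=
  ∀ v, (closedNbhd G v ∩ S).Nonempty

/-- `S` is irredundant: each `v ∈ S` has a private neighbour, that is, a vertex `u` (possibly
`v` itself) whose closed neighbourhood meets `S` in `v` only. -/
def IsIrredundant (G : SimpleGraph V) (S : Set V) : Prop :=
  ∀ v ∈ S, ∃ u, closedNbhd G u ∩ S = {v}

/-- `f` maps each closed neighbourhood bijectively onto a closed neighbourhood; such maps pull
dominating irredundant sets back to dominating irredundant sets. -/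
def IsLocalIso (G : SimpleGraph V) (H : SimpleGraph W) (f : V → W) : Prop :=
  ∀ v, Set.BijOn f (closedNbhd G v) (closedNbhd H (f v))

theorem mem_closedNbhd_comm {v w : V} : w ∈ closedNbhd G v ↔ v ∈ closedNbhd G w := by
  simp only [closedNbhd, Set.mem_insert_iff, SimpleGraph.mem_neighborSet, eq_comm (a := w),
    G.adj_comm v]

theorem isDominating_iff_forall_notMem {S : Set V} :
    IsDominating G S ↔ ∀ v ∉ S, ∃ w ∈ S, G.Adj v w := by
  refine forall_congr' fun v => ?_
  by_cases hv : v ∈ S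
  · simpa only [hv, not_true_eq_false, false_imp_iff, iff_true] using ⟨v, Set.mem_insert _ _, hv⟩
  · simp only [closedNbhd, Set.insert_inter_of_notMem hv, hv, not_false_eq_true, forall_true_left,
      Set.Nonempty, Set.mem_inter_iff, SimpleGraph.mem_neighborSet, and_comm]

theorem isIrredundant_of_minimal {S : Set V} (hS : Minimal (IsDominating G) S) :
    IsIrredundant G S := by
  intro v hv
  have hnot : ¬ IsDominating G (S \ {v}) :=
    hS.not_prop_of_lt (Set.sdiff_singleton_ssubset.2 hv)
  simp only [IsDominating, not_forall, Set.not_nonempty_iff_eq_empty] at hnot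
  obtain ⟨u, hu⟩ := hnot
  have hsub : closedNbhd G u ∩ S ⊆ {v} := by
    rwa [← Set.inter_sdiff_assoc, Set.sdiff_eq_empty] at hu
  exact ⟨u, (Set.Nonempty.subset_singleton_iff (hS.prop u)).1 hsub⟩

theorem isLocalIso_iso (e : G ≃g H) : IsLocalIso G H e := by
  refine fun v => ⟨fun w hw => ?_, e.injective.injOn, fun w hw => ⟨e.symm w, ?_, by simp⟩⟩
  · simpa [closedNbhd, e.map_adj_iff] using hw
  · simpa [closedNbhd, ← e.map_adj_iff, e.symm_apply_eq] using hw

theorem IsDominating.preimage {f : V → W} (hf : IsLocalIso G H f) {S : Set W}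
    (hS : IsDominating H S) : IsDominating G (f ⁻¹' S) := by
  intro v
  obtain ⟨_, hw, hwS⟩ := hS (f v)
  obtain ⟨w, hwv, rfl⟩ := (hf v).surjOn hw
  exact ⟨w, hwv, hwS⟩

theorem IsIrredundant.preimage {f : V → W} (hf : IsLocalIso G H f) {S : Set W}
    (hS : IsIrredundant H S) : IsIrredundant G (f ⁻¹' S) := by
  intro v hv
  obtain ⟨u', hu'⟩ := hS (f v) hv
  have hfv : f v ∈ closedNbhd H u' := (hu'.ge rfl).1
  obtain ⟨u, huv, rfl⟩ := (hf v).surjOn (mem_closedNbhd_comm.1 hfv)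
  have hvu : v ∈ closedNbhd G u := mem_closedNbhd_comm.1 huv
  refine ⟨u, Set.eq_singleton_iff_unique_mem.2 ⟨⟨hvu, hv⟩, fun w ⟨hwu, hw⟩ => ?_⟩⟩
  exact (hf u).injOn hwu hvu (hu'.le ⟨(hf u).mapsTo hwu, hw⟩)

end General

section Ladder

/-- The straight two-way infinite ladder covering every flower snark: copy `i : ℤ` has a hub
`(i, 0)` adjacent to its legs `(i, k)`, `k ≠ 0`, and each leg is adjacent to the legs with the same
label in the two neighbouring copies. -/
def clawLadder : SimpleGraph (ℤ × Fin 4) :=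
  SimpleGraph.fromRel fun p q =>
    (p.1 = q.1 ∧ p.2 = 0) ∨ (q.1 = p.1 + 1 ∧ q.2 = p.2 ∧ p.2 ≠ 0)

theorem mem_closedNbhd_hub {i : ℤ} {q : ℤ × Fin 4} :
    q ∈ closedNbhd clawLadder (i, 0) ↔ q.1 = i := by
  obtain ⟨j, l⟩ := q
  simp only [closedNbhd, clawLadder, Set.mem_insert_iff, SimpleGraph.mem_neighborSet,
    SimpleGraph.fromRel_adj, Prod.mk.injEq]
  grind

theorem mem_closedNbhd_leg {i : ℤ} {k : Fin 4} (hk : k ≠ 0) {q : ℤ × Fin 4} :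
    q ∈ closedNbhd clawLadder (i, k) ↔
      q = (i, k) ∨ q = (i, 0) ∨ q = (i + 1, k) ∨ q = (i - 1, k) := by
  obtain ⟨j, l⟩ := q
  simp only [closedNbhd, clawLadder, Set.mem_insert_iff, SimpleGraph.mem_neighborSet,
    SimpleGraph.fromRel_adj, Prod.mk.injEq]
  grind

/-- The reflection `i ↦ -i` of the ladder, which exchanges the two neighbours of copy `0`. -/
def ladderReflection : clawLadder ≃g clawLadder where
  toEquiv := (Equiv.neg ℤ).prodCongr (Equiv.refl (Fin 4))
  map_rel_iff' := by
    rintro ⟨i, k⟩ ⟨j, l⟩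
    simp only [clawLadder, SimpleGraph.fromRel_adj, Equiv.prodCongr_apply, Prod.map_apply,
      Equiv.neg_apply, Equiv.refl_apply]
    grind

variable {T : Set (ℤ × Fin 4)} {i : ℤ}

/-- The weight of copy `i` of the ladder in `T`. -/
noncomputable def ladderWeight (T : Set (ℤ × Fin 4)) (i : ℤ) : ℕ :=
  {k : Fin 4 | (i, k) ∈ T}.ncard

theorem ladderWeight_reflection (T : Set (ℤ × Fin 4)) (i : ℤ) :
    ladderWeight (ladderReflection ⁻¹' T) i = ladderWeight T (-i) :=
  rfl

theorem exists_mem_copy (hd : IsDominating clawLadder T) (i : ℤ) : ∃ k, (i, k) ∈ T := by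
  obtain ⟨⟨j, k⟩, hj, hk⟩ := hd (i, 0)
  obtain rfl : j = i := mem_closedNbhd_hub.1 hj
  exact ⟨k, hk⟩

theorem one_le_ladderWeight (hd : IsDominating clawLadder T) (i : ℤ) : 1 ≤ ladderWeight T i :=
  (Set.ncard_pos (Set.toFinite _)).2 (exists_mem_copy hd i)

theorem ladderWeight_eq_one (hd : IsDominating clawLadder T) {k l m : Fin 4}
    (hkl : k ≠ l) (hkm : k ≠ m) (hlm : l ≠ m)
    (hk : (i, k) ∉ T) (hl : (i, l) ∉ T) (hm : (i, m) ∉ T) : ladderWeight T i = 1 := by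
  refine le_antisymm ?_ (one_le_ladderWeight hd i)
  have hsub : {x : Fin 4 | (i, x) ∈ T} ⊆ ({k, l, m} : Set (Fin 4))ᶜ := by
    rintro x hx (rfl | rfl | rfl)
    exacts [hk hx, hl hx, hm hx]
  have hcard : (({k, l, m} : Set (Fin 4))ᶜ).ncard = 1 := by
    rw [Set.ncard_compl, Set.ncard_eq_three.2 ⟨k, l, m, hkl, hkm, hlm, rfl⟩, Nat.card_fin]
  exact hcard ▸ Set.ncard_le_ncard hsub

theorem private_hub_cases (hi : IsIrredundant clawLadder T) (h : (i, 0) ∈ T) :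
    (∀ k ≠ 0, (i, k) ∉ T) ∨
      ∃ k ≠ 0, (i, k) ∉ T ∧ (i + 1, k) ∉ T ∧ (i - 1, k) ∉ T := by
  obtain ⟨⟨j, k⟩, hu⟩ := hi _ h
  have hmem : ∀ q ∈ closedNbhd clawLadder (j, k), q ∈ T → q = (i, 0) :=
    fun q hq hqT => hu.le ⟨hq, hqT⟩
  obtain rfl : i = j := mem_closedNbhd_hub.1 (mem_closedNbhd_comm.1 (hu.ge rfl).1) |>.symm
  by_cases hk : k = 0
  · subst hk
    simp only [mem_closedNbhd_hub] at hmem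
    exact .inl fun l hl hlT => hl (by simpa using hmem _ rfl hlT)
  · simp only [mem_closedNbhd_leg hk] at hmem
    exact .inr ⟨k, hk, by grind, by grind, by grind⟩

theorem private_leg_cases (hi : IsIrredundant clawLadder T) {k l : Fin 4} (hk : k ≠ 0)
    (hkT : (i, k) ∈ T) (hkl : k ≠ l) (hlT : (i, l) ∈ T) :
    ((i, 0) ∉ T ∧ (i + 1, k) ∉ T ∧ (i - 1, k) ∉ T) ∨
      ((i + 1, 0) ∉ T ∧ (i + 1, k) ∉ T ∧ (i + 2, k) ∉ T) ∨
      ((i - 1, 0) ∉ T ∧ (i - 1, k) ∉ T ∧ (i - 2, k) ∉ T) := by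
  obtain ⟨u, hu⟩ := hi _ hkT
  have hmem : ∀ q ∈ closedNbhd clawLadder u, q ∈ T → q = (i, k) :=
    fun q hq hqT => hu.le ⟨hq, hqT⟩
  have hadj : u ∈ closedNbhd clawLadder (i, k) := mem_closedNbhd_comm.1 (hu.ge rfl).1
  rcases (mem_closedNbhd_leg hk).1 hadj with rfl | rfl | rfl | rfl
  · simp only [mem_closedNbhd_leg hk] at hmem
    grind
  · simp only [mem_closedNbhd_hub] at hmem
    exact absurd (hmem _ rfl hlT) (by simpa using hkl.symm)
  · simp only [mem_closedNbhd_leg hk] at hmem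
    grind
  · simp only [mem_closedNbhd_leg hk] at hmem
    grind

theorem ladderWeight_le_three (hi : IsIrredundant clawLadder T) (i : ℤ) :
    ladderWeight T i ≤ 3 := by
  by_contra! hlt
  have hall : ∀ k, (i, k) ∈ T := by
    have huniv : {k : Fin 4 | (i, k) ∈ T} = Set.univ := by
      by_contra hne
      exact (Set.ncard_lt_card hne).not_ge (by rwa [Nat.card_fin])
    exact fun k => huniv.ge (Set.mem_univ k)
  obtain hlegs | ⟨k, -, hk, -⟩ := private_hub_cases hi (hall 0)
  · exact hlegs 1 (by decide) (hall 1)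
  · exact hk (hall k)

theorem exists_missing_of_ladderWeight_eq_three (h : ladderWeight T i = 3) :
    ∃ m, ∀ k, (i, k) ∈ T ↔ k ≠ m := by
  have hcompl : ({k : Fin 4 | (i, k) ∈ T}ᶜ).ncard = 1 := by
    rw [Set.ncard_compl, Nat.card_fin, ← ladderWeight, h]
  obtain ⟨m, hm⟩ := Set.ncard_eq_one.1 hcompl
  exact ⟨m, fun k => by simpa using (Set.ext_iff.1 hm k).not⟩

theorem private_leg_cases_of_hub_mem (hi : IsIrredundant clawLadder T) (hub : (i, 0) ∈ T)
    {k : Fin 4} (hk : k ≠ 0) (hkT : (i, k) ∈ T) :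
    ((i + 1, 0) ∉ T ∧ (i + 1, k) ∉ T) ∨ ((i - 1, 0) ∉ T ∧ (i - 1, k) ∉ T) := by
  obtain ⟨h, -⟩ | ⟨h, h', -⟩ | ⟨h, h', -⟩ := private_leg_cases hi hk hkT hk hub
  exacts [absurd hub h, .inl ⟨h, h'⟩, .inr ⟨h, h'⟩]

theorem exists_vacant_leg_of_hub_mem (hi : IsIrredundant clawLadder T) (hub : (i, 0) ∈ T)
    {k : Fin 4} (hk : k ≠ 0) (hkT : (i, k) ∈ T) :
    ∃ m ≠ 0, (i, m) ∉ T ∧ (i + 1, m) ∉ T ∧ (i - 1, m) ∉ T :=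
  (private_hub_cases hi hub).resolve_left fun h => h k hk hkT

theorem ladderWeight_succ_eq_one_of_hub_mem (hd : IsDominating clawLadder T)
    (hi : IsIrredundant clawLadder T) {m : Fin 4} (hm : m ≠ 0) (h : ∀ k, (i, k) ∈ T ↔ k ≠ m) :
    ladderWeight T (i + 1) = 1 := by
  have hub : (i, 0) ∈ T := (h 0).2 hm.symm
  have hlegs : ∀ m : Fin 4, m ≠ 0 → ∃ k l : Fin 4, k ≠ 0 ∧ l ≠ 0 ∧ k ≠ m ∧ l ≠ m ∧
      ∀ x, x = 0 ∨ x = k ∨ x = l ∨ x = m := by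
    decide
  obtain ⟨k, l, hk, hl, hkm, hlm, hcover⟩ := hlegs m hm
  obtain ⟨p, -, hp, hp_succ, hp_pred⟩ := exists_vacant_leg_of_hub_mem hi hub hk ((h k).2 hkm)
  obtain rfl : p = m := by simpa only [h, not_not] using hp
  obtain ⟨h0, hk'⟩ | ⟨h0, hk'⟩ := private_leg_cases_of_hub_mem hi hub hk ((h k).2 hkm)
  · exact ladderWeight_eq_one hd hk.symm hm.symm hkm h0 hk' hp_succ
  -- If both legs have their private neighbour in copy `i - 1`, that copy is empty.
  obtain ⟨h0', hl'⟩ | ⟨-, hl'⟩ := private_leg_cases_of_hub_mem hi hub hl ((h l).2 hlm)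
  · exact ladderWeight_eq_one hd hl.symm hm.symm hlm h0' hl' hp_succ
  obtain ⟨x, hx⟩ := exists_mem_copy hd (i - 1)
  obtain rfl | rfl | rfl | rfl := hcover x
  exacts [absurd hx h0, absurd hx hk', absurd hx hl', absurd hx hp_pred]

theorem pred_notMem_of_legs (hi : IsIrredundant clawLadder T) (h : ∀ k ≠ 0, (i, k) ∈ T)
    {k : Fin 4} (hk : k ≠ 0) (hkT : (i + 1, k) ∈ T) : (i - 1, 0) ∉ T ∧ (i - 1, k) ∉ T := by
  obtain ⟨l, hl, hkl⟩ : ∃ l : Fin 4, l ≠ 0 ∧ k ≠ l := by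
    clear hkT; revert k; decide
  obtain ⟨-, h', -⟩ | ⟨-, h', -⟩ | ⟨h0, h', -⟩ := private_leg_cases hi hk (h k hk) hkl (h l hl)
  exacts [absurd hkT h', absurd hkT h', ⟨h0, h'⟩]

theorem succ_notMem_of_legs (hi : IsIrredundant clawLadder T) (h : ∀ k ≠ 0, (i, k) ∈ T)
    {k l : Fin 4} (hk : k ≠ 0) (hkT : (i + 1, k) ∈ T) (hkl : k ≠ l) (hlT : (i + 1, l) ∈ T) :
    (i + 2, 0) ∉ T ∧ (i + 2, k) ∉ T := by
  have hcases := private_leg_cases hi hk hkT hkl hlT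
  rw [add_sub_cancel_right, add_assoc, one_add_one_eq_two] at hcases
  obtain ⟨-, -, h'⟩ | ⟨h0, h', -⟩ | ⟨-, h', -⟩ := hcases
  exacts [absurd (h k hk) h', ⟨h0, h'⟩, absurd (h k hk) h']

-- Two legs in copy `i + 1` would leave copies `i - 1` and `i + 2` with nothing but the third leg,
-- so that the third leg of copy `i` has no private neighbour.
theorem succ_subsingleton_of_legs (hd : IsDominating clawLadder T)
    (hi : IsIrredundant clawLadder T) (h : ∀ k ≠ 0, (i, k) ∈ T)
    {k l : Fin 4} (hk : k ≠ 0) (hkT : (i + 1, k) ∈ T) (hl : l ≠ 0) (hlT : (i + 1, l) ∈ T) :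
    k = l := by
  by_contra hkl
  obtain ⟨m, hm, hkm, hcover⟩ :
      ∃ m, m ≠ 0 ∧ m ≠ k ∧ ∀ x, x = 0 ∨ x = k ∨ x = l ∨ x = m := by
    clear hkT hlT; revert k l; decide
  obtain ⟨hpred0, hpredk⟩ := pred_notMem_of_legs hi h hk hkT
  obtain ⟨-, hpredl⟩ := pred_notMem_of_legs hi h hl hlT
  obtain ⟨hsucc0, hsucck⟩ := succ_notMem_of_legs hi h hk hkT hkl hlT
  obtain ⟨-, hsuccl⟩ := succ_notMem_of_legs hi h hl hlT (Ne.symm hkl) hkT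
  have hpredm : (i - 1, m) ∈ T := by
    obtain ⟨x, hx⟩ := exists_mem_copy hd (i - 1)
    obtain rfl | rfl | rfl | rfl := hcover x
    exacts [absurd hx hpred0, absurd hx hpredk, absurd hx hpredl, hx]
  have hsuccm : (i + 2, m) ∈ T := by
    obtain ⟨x, hx⟩ := exists_mem_copy hd (i + 2)
    obtain rfl | rfl | rfl | rfl := hcover x
    exacts [absurd hx hsucc0, absurd hx hsucck, absurd hx hsuccl, hx]
  obtain ⟨-, -, h'⟩ | ⟨-, -, h'⟩ | ⟨-, h', -⟩ := private_leg_cases hi hm (h m hm) hkm (h k hk)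
  exacts [h' hpredm, h' hsuccm, h' hpredm]

theorem ladderWeight_succ_eq_one_of_legs (hd : IsDominating clawLadder T)
    (hi : IsIrredundant clawLadder T) (h : ∀ k ≠ 0, (i, k) ∈ T) :
    ladderWeight T (i + 1) = 1 := by
  by_cases hub : (i + 1, 0) ∈ T
  · obtain hlegs | ⟨k, hk, -, -, hki⟩ := private_hub_cases hi hub
    · exact ladderWeight_eq_one hd (k := 1) (l := 2) (m := 3) (by decide) (by decide) (by decide)
        (hlegs 1 (by decide)) (hlegs 2 (by decide)) (hlegs 3 (by decide))
    · exact absurd (h k hk) (by rwa [add_sub_cancel_right] at hki)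
  · have hne : ∀ k, (i + 1, k) ∈ T → k ≠ 0 := by
      rintro _ hkT rfl
      exact hub hkT
    refine le_antisymm ((Set.ncard_le_one (Set.toFinite _)).2 fun k hk l hl => ?_)
      (one_le_ladderWeight hd _)
    exact succ_subsingleton_of_legs hd hi h (hne k hk) hk (hne l hl) hl

theorem ladderWeight_succ_eq_one (hd : IsDominating clawLadder T)
    (hi : IsIrredundant clawLadder T) (h : ladderWeight T i = 3) : ladderWeight T (i + 1) = 1 := by
  obtain ⟨m, hm⟩ := exists_missing_of_ladderWeight_eq_three h
  obtain rfl | hm0 := eq_or_ne m 0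
  · exact ladderWeight_succ_eq_one_of_legs hd hi fun k => (hm k).2
  · exact ladderWeight_succ_eq_one_of_hub_mem hd hi hm0 hm

theorem ladderWeight_pred_eq_one (hd : IsDominating clawLadder T)
    (hi : IsIrredundant clawLadder T) (h : ladderWeight T i = 3) : ladderWeight T (i - 1) = 1 := by
  have hrefl := isLocalIso_iso ladderReflection
  rw [← neg_neg i, ← ladderWeight_reflection] at h
  simpa only [ladderWeight_reflection, neg_add, neg_neg, ← sub_eq_add_neg] using
    ladderWeight_succ_eq_one (hd.preimage hrefl) (hi.preimage hrefl) h

theorem exists_missing_of_ladderWeight_eq_two (h : ladderWeight T i = 2) (hub : (i, 0) ∉ T) :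
    ∃ m ≠ 0, ∀ k, (i, k) ∈ T ↔ k ≠ 0 ∧ k ≠ m := by
  have hcompl : ({k : Fin 4 | (i, k) ∈ T}ᶜ).ncard = 2 := by
    rw [Set.ncard_compl, Nat.card_fin, ← ladderWeight, h]
  obtain ⟨x, y, hxy, heq⟩ := Set.ncard_eq_two.1 hcompl
  have hmem : ∀ k, (i, k) ∉ T ↔ k = x ∨ k = y := fun k => Set.ext_iff.1 heq k
  obtain rfl | rfl := (hmem 0).1 hub
  · exact ⟨y, hxy.symm, fun k => by grind⟩
  · exact ⟨x, hxy, fun k => by grind⟩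

theorem hub_notMem_of_forall_ladderWeight_eq_two (hd : IsDominating clawLadder T)
    (hi : IsIrredundant clawLadder T) (h : ∀ i, ladderWeight T i = 2) (i : ℤ) : (i, 0) ∉ T := by
  intro hub
  obtain ⟨k, hkT, hk⟩ : ∃ k, (i, k) ∈ T ∧ k ≠ 0 :=
    Set.exists_ne_of_one_lt_ncard (s := {k | (i, k) ∈ T}) (one_lt_two.trans_eq (h i).symm) 0
  obtain ⟨m, hm, hmT, hm_succ, hm_pred⟩ := exists_vacant_leg_of_hub_mem hi hub hk hkT
  have hkm : k ≠ m := by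
    rintro rfl
    exact hmT hkT
  obtain ⟨h0, hk'⟩ | ⟨h0, hk'⟩ := private_leg_cases_of_hub_mem hi hub hk hkT
  · have := h (i + 1) ▸ ladderWeight_eq_one hd hk.symm hm.symm hkm h0 hk' hm_succ
    omega
  · have := h (i - 1) ▸ ladderWeight_eq_one hd hk.symm hm.symm hkm h0 hk' hm_pred
    omega

-- The two legs of copy `i` in `T` have no private neighbour inside their own copy, and only one of
-- them can find one on each side: the missing leg changes after copy `i` and then stays the same.
theorem missing_leg_succ (hi : IsIrredundant clawLadder T) {m : ℤ → Fin 4} (hm0 : ∀ i, m i ≠ 0)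
    (hm : ∀ i k, (i, k) ∈ T ↔ k ≠ 0 ∧ k ≠ m i) (i : ℤ) :
    m i ≠ m (i + 1) ∧ m (i + 1) = m (i + 2) := by
  have hlegs : ∀ m : Fin 4, m ≠ 0 → ∃ k l, k ≠ 0 ∧ l ≠ 0 ∧ k ≠ l ∧ k ≠ m ∧ l ≠ m := by decide
  obtain ⟨k, l, hk, hl, hkl, hkm, hlm⟩ := hlegs (m i) (hm0 i)
  have hkT := (hm i k).2 ⟨hk, hkm⟩
  have hlT := (hm i l).2 ⟨hl, hlm⟩
  have hcasek := private_leg_cases hi hk hkT hkl hlT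
  have hcasel := private_leg_cases hi hl hlT hkl.symm hkT
  simp only [hm] at hcasek hcasel
  grind

theorem exists_ladderWeight_ne_two (hd : IsDominating clawLadder T)
    (hi : IsIrredundant clawLadder T) : ∃ i, ladderWeight T i ≠ 2 := by
  by_contra! h
  choose m hm0 hm using fun i => exists_missing_of_ladderWeight_eq_two (h i)
    (hub_notMem_of_forall_ladderWeight_eq_two hd hi h i)
  exact (missing_leg_succ hi hm0 hm 1).1 (missing_leg_succ hi hm0 hm 0).2

end Ladder

section Rotation
variable {α β : Type*}

theorem semiconj_zpow {f : α → β} {σ : Equiv.Perm α} {τ : Equiv.Perm β}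
    (h : Function.Semiconj f σ τ) : ∀ j : ℤ, Function.Semiconj f ⇑(σ ^ j) ⇑(τ ^ j)
  | .ofNat m => by
    simpa only [Int.ofNat_eq_natCast, zpow_natCast, Equiv.Perm.coe_pow] using h.iterate_right m
  | .negSucc m => by
    have hpow : Function.Semiconj f ⇑(σ ^ (m + 1)) ⇑(τ ^ (m + 1)) := by
      simpa only [Equiv.Perm.coe_pow] using h.iterate_right (m + 1)
    rw [zpow_negSucc, zpow_negSucc]
    exact hpow.inverses_right (σ ^ (m + 1)).rightInverse_symm (τ ^ (m + 1)).leftInverse_symm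

theorem isCycleOn_finRotate (n : ℕ) : (finRotate n).IsCycleOn Set.univ := by
  match n with
  | 0 | 1 => exact Equiv.Perm.isCycleOn_of_subsingleton _ _
  | n + 2 =>
    convert (isCycle_finRotate (n := n)).isCycleOn
    simp [eq_comm]

theorem union_eq_univ_of_isCycleOn [Finite α] {σ : Equiv.Perm α} (hσ : σ.IsCycleOn Set.univ)
    {A B : Set α} (hAB : ∀ i ∈ A, σ i ∈ B) (hBA : ∀ i, σ i ∈ A → i ∈ B)
    (hcard : B.ncard ≤ A.ncard) (hne : (A ∪ B).Nonempty) : A ∪ B = Set.univ := by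
  have hpre : σ ⁻¹' A = B := Set.eq_of_subset_of_ncard_le hBA <| by
    rwa [Set.ncard_preimage_of_injective_subset_range σ.injective (by simp)]
  have hstep : ∀ i ∈ A ∪ B, σ i ∈ A ∪ B := by
    rintro i (hi | hi)
    · exact .inr (hAB i hi)
    · exact .inl (hpre.ge hi)
  obtain ⟨a, ha⟩ := hne
  refine Set.eq_univ_of_forall fun b => ?_
  obtain ⟨m, -, rfl⟩ := hσ.exists_pow_eq' Set.finite_univ (Set.mem_univ a) (Set.mem_univ b)
  exact Set.MapsTo.perm_pow hstep m ha

end Rotation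

section Snark
variable {n : ℕ} {S : Set (FV n)}

/-- The rotation of `J_n` by one copy, interchanging the labels `c` and `d` across the twist. -/
def snarkShift (n : ℕ) : Equiv.Perm (FV n) :=
  Equiv.prodShear (finRotate n) fun i => if (i : ℕ) + 1 = n then Equiv.swap 2 3 else 1

theorem snarkShift_fst (v : FV n) : (snarkShift n v).1 = finRotate n v.1 := rfl

theorem snarkShift_snd_eq_zero_iff (v : FV n) : (snarkShift n v).2 = 0 ↔ v.2 = 0 := by
  simp only [snarkShift, Equiv.prodShear_apply]
  split_ifs
  · rw [Equiv.swap_apply_eq_iff, Equiv.swap_apply_of_ne_of_ne (by decide) (by decide)]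
  · rfl

theorem flowerSnark_adj_iff {v w : FV n} :
    (flowerSnark n).Adj v w ↔ v ≠ w ∧
      ((v.1 = w.1 ∧ (v.2 = 0 ∨ w.2 = 0)) ∨
        (v.2 ≠ 0 ∧ (w = snarkShift n v ∨ v = snarkShift n w))) := by
  obtain ⟨i, k⟩ := v
  obtain ⟨j, l⟩ := w
  obtain _ | m := n
  · exact i.elim0
  have hi := i.2
  have hj := j.2
  have hmod : ∀ a : ℕ, a < m + 1 → (a + 1) % (m + 1) = if a = m then 0 else a + 1 := by
    intro a ha
    split_ifs with h
    · rw [h, Nat.mod_self]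
    · exact Nat.mod_eq_of_lt (by omega)
  simp only [flowerSnark, SimpleGraph.fromRel_adj, snarkShift, Equiv.prodShear_apply, Prod.mk.injEq,
    Fin.ext_iff (n := m + 1), coe_finRotate, hmod _ hi, hmod _ hj, ne_eq, Fin.val_last]
  by_cases hi_last : (i : ℕ) = m <;> by_cases hj_last : (j : ℕ) = m <;>
    fin_cases k <;> fin_cases l <;>
    simp [hi_last, hj_last, Equiv.swap_apply_def, -Fin.val_eq_zero_iff] <;> omega

theorem closedNbhd_flowerSnark_hub {v : FV n} (hv : v.2 = 0) :
    closedNbhd (flowerSnark n) v = {w | w.1 = v.1} := by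
  ext w
  simp only [closedNbhd, Set.mem_insert_iff, SimpleGraph.mem_neighborSet, flowerSnark_adj_iff,
    Set.mem_ofPred_eq]
  grind

theorem closedNbhd_flowerSnark_leg {v : FV n} (hv : v.2 ≠ 0) :
    closedNbhd (flowerSnark n) v = {v, (v.1, 0), snarkShift n v, (snarkShift n)⁻¹ v} := by
  ext w
  simp only [closedNbhd, Set.mem_insert_iff, SimpleGraph.mem_neighborSet, flowerSnark_adj_iff,
    Set.mem_singleton_iff, Equiv.Perm.eq_inv_iff_eq]
  grind

/-- The covering map from the ladder onto `J_n` that identifies copy `0` with copy `i` and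
intertwines the translation of the ladder with `snarkShift`. -/
def snarkCover (i : Fin n) (p : ℤ × Fin 4) : FV n :=
  (snarkShift n ^ p.1) (i, p.2)

theorem snarkCover_fst (i : Fin n) (p : ℤ × Fin 4) :
    (snarkCover i p).1 = (finRotate n ^ p.1) i :=
  semiconj_zpow (f := Prod.fst) snarkShift_fst p.1 (i, p.2)

theorem snarkCover_snd_eq_zero_iff (i : Fin n) (p : ℤ × Fin 4) :
    (snarkCover i p).2 = 0 ↔ p.2 = 0 := by
  have hsemi := semiconj_zpow (f := fun v : FV n => v.2 = 0) (τ := 1)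
    (fun v => propext (snarkShift_snd_eq_zero_iff v)) p.1 (i, p.2)
  rw [one_zpow] at hsemi
  exact iff_of_eq hsemi

theorem snarkCover_add_one (i : Fin n) (j : ℤ) (k : Fin 4) :
    snarkCover i (j + 1, k) = snarkShift n (snarkCover i (j, k)) := by
  simp only [snarkCover, add_comm j, zpow_one_add, Equiv.Perm.mul_apply]

theorem snarkCover_sub_one (i : Fin n) (j : ℤ) (k : Fin 4) :
    snarkCover i (j - 1, k) = (snarkShift n)⁻¹ (snarkCover i (j, k)) := by
  rw [Equiv.Perm.eq_inv_iff_eq, ← snarkCover_add_one, sub_add_cancel]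

theorem abs_fst_sub_fst_le_one {p q : ℤ × Fin 4} (h : q ∈ closedNbhd clawLadder p) :
    |q.1 - p.1| ≤ 1 := by
  obtain ⟨j, k⟩ := p
  obtain rfl | hk := eq_or_ne k 0
  · simp [mem_closedNbhd_hub.1 h]
  · obtain rfl | rfl | rfl | rfl := (mem_closedNbhd_leg hk).1 h <;> simp

theorem snarkCover_injOn (hn : 3 ≤ n) (i : Fin n) (p : ℤ × Fin 4) :
    Set.InjOn (snarkCover i) (closedNbhd clawLadder p) := by
  rintro ⟨j, k⟩ hq ⟨j', k'⟩ hr heq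
  have hcycle : (finRotate n).IsCycleOn ((Finset.univ : Finset (Fin n)) : Set (Fin n)) := by
    simpa only [Finset.coe_univ] using isCycleOn_finRotate n
  have hmod : j ≡ j' [ZMOD n] := by
    have hrot := congrArg Prod.fst heq
    rwa [snarkCover_fst, snarkCover_fst, hcycle.zpow_apply_eq_zpow_apply (Finset.mem_univ i),
      Finset.card_univ, Fintype.card_fin] at hrot
  have hclose : |j' - j| < n := by
    have hj := abs_le.1 (abs_fst_sub_fst_le_one hq)
    have hj' := abs_le.1 (abs_fst_sub_fst_le_one hr)
    rw [abs_lt]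
    simp only at hj hj'
    omega
  obtain rfl : j' = j := sub_eq_zero.1 (Int.eq_zero_of_abs_lt_dvd hmod.dvd hclose)
  simpa only [Prod.mk.injEq, true_and] using (snarkShift n ^ j').injective heq

theorem snarkCover_mk_injective (i : Fin n) (j : ℤ) :
    Function.Injective fun k => snarkCover i (j, k) :=
  (snarkShift n ^ j).injective.comp (Prod.mk_right_injective i)

theorem range_snarkCover_mk (i : Fin n) (j : ℤ) :
    Set.range (fun k => snarkCover i (j, k)) = {w | w.1 = (finRotate n ^ j) i} := by
  ext w
  obtain ⟨⟨i', k⟩, rfl⟩ := (snarkShift n ^ j).surjective w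
  have hfst : ((snarkShift n ^ j) (i', k)).1 = (finRotate n ^ j) i' := snarkCover_fst i' (j, k)
  simp [snarkCover, hfst, eq_comm]

theorem isLocalIso_snarkCover (hn : 3 ≤ n) (i : Fin n) :
    IsLocalIso clawLadder (flowerSnark n) (snarkCover i) := by
  rintro ⟨j, k⟩
  suffices snarkCover i '' closedNbhd clawLadder (j, k) =
      closedNbhd (flowerSnark n) (snarkCover i (j, k)) from
    this ▸ (snarkCover_injOn hn i (j, k)).bijOn_image
  have hhub : (snarkCover i (j, 0)).2 = 0 := (snarkCover_snd_eq_zero_iff i (j, 0)).2 rfl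
  obtain rfl | hk := eq_or_ne k 0
  · have hset : closedNbhd clawLadder (j, 0) = Set.range (Prod.mk j) := by
      ext q
      simp [mem_closedNbhd_hub, Prod.ext_iff, eq_comm]
    rw [hset, ← Set.range_comp, closedNbhd_flowerSnark_hub hhub, snarkCover_fst]
    exact range_snarkCover_mk i j
  · have hset : closedNbhd clawLadder (j, k) = {(j, k), (j, 0), (j + 1, k), (j - 1, k)} :=
      Set.ext fun _ => mem_closedNbhd_leg hk
    have hhub_eq : snarkCover i (j, 0) = ((snarkCover i (j, k)).1, 0) :=
      Prod.ext (by rw [snarkCover_fst, snarkCover_fst]) hhub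
    rw [closedNbhd_flowerSnark_leg (mt (snarkCover_snd_eq_zero_iff i (j, k)).1 hk), hset,
      Set.image_insert_eq, Set.image_insert_eq, Set.image_insert_eq, Set.image_singleton,
      snarkCover_add_one, snarkCover_sub_one, hhub_eq]

theorem ladderWeight_preimage_snarkCover (S : Set (FV n)) (i : Fin n) (j : ℤ) :
    ladderWeight (snarkCover i ⁻¹' S) j = copyWeight S ((finRotate n ^ j) i : ℕ) := by
  have hcopy : {v : FV n | (v.1 : ℕ) = ((finRotate n ^ j) i : ℕ) % n} =
      Set.range fun k => snarkCover i (j, k) := by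
    simp only [Nat.mod_eq_of_lt (Fin.is_lt _), ← Fin.ext_iff, range_snarkCover_mk]
  rw [copyWeight, hcopy, ← Set.image_preimage_eq_inter_range,
    Set.ncard_image_of_injective _ (snarkCover_mk_injective i j)]
  rfl

theorem MinimalDominating.minimal (hS : MinimalDominating n S) :
    Minimal (IsDominating (flowerSnark n)) S := by
  have hdom : IsDominating (flowerSnark n) = Dominating n :=
    funext fun _ => propext isDominating_iff_forall_notMem
  rw [hdom, Set.minimal_iff_forall_ssubset]
  exact ⟨hS.1, fun T hT => hS.2 T hT⟩

theorem MinimalDominating.isDominating_preimage (hn : 3 ≤ n) (hS : MinimalDominating n S)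
    (i : Fin n) : IsDominating clawLadder (snarkCover i ⁻¹' S) :=
  hS.minimal.prop.preimage (isLocalIso_snarkCover hn i)

theorem MinimalDominating.isIrredundant_preimage (hn : 3 ≤ n) (hS : MinimalDominating n S)
    (i : Fin n) : IsIrredundant clawLadder (snarkCover i ⁻¹' S) :=
  (isIrredundant_of_minimal hS.minimal).preimage (isLocalIso_snarkCover hn i)

theorem copyWeight_eq_ladderWeight (S : Set (FV n)) (i : Fin n) :
    copyWeight S (i : ℕ) = ladderWeight (snarkCover i ⁻¹' S) 0 := by
  rw [ladderWeight_preimage_snarkCover, zpow_zero, Equiv.Perm.one_apply]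

theorem copyWeight_mem_Icc (hn : 3 ≤ n) (hS : MinimalDominating n S) (i : Fin n) :
    copyWeight S (i : ℕ) ∈ Set.Icc 1 3 := by
  rw [copyWeight_eq_ladderWeight]
  exact ⟨one_le_ladderWeight (hS.isDominating_preimage hn i) 0,
    ladderWeight_le_three (hS.isIrredundant_preimage hn i) 0⟩

theorem copyWeight_finRotate_eq_one (hn : 3 ≤ n) (hS : MinimalDominating n S) {i : Fin n}
    (hi : copyWeight S (i : ℕ) = 3) : copyWeight S (finRotate n i : ℕ) = 1 := by
  rw [copyWeight_eq_ladderWeight] at hi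
  have hsucc := ladderWeight_succ_eq_one (hS.isDominating_preimage hn i)
    (hS.isIrredundant_preimage hn i) hi
  rwa [ladderWeight_preimage_snarkCover, zero_add, zpow_one] at hsucc

theorem copyWeight_eq_one_of_finRotate (hn : 3 ≤ n) (hS : MinimalDominating n S) {i : Fin n}
    (hi : copyWeight S (finRotate n i : ℕ) = 3) : copyWeight S (i : ℕ) = 1 := by
  rw [copyWeight_eq_ladderWeight] at hi
  have hpred := ladderWeight_pred_eq_one (hS.isDominating_preimage hn _)
    (hS.isIrredundant_preimage hn _) hi
  rwa [ladderWeight_preimage_snarkCover, zero_sub, zpow_neg_one, Equiv.Perm.inv_def,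
    Equiv.symm_apply_apply] at hpred

theorem exists_copyWeight_ne_two (hn : 3 ≤ n) (hS : MinimalDominating n S) :
    ∃ i : Fin n, copyWeight S (i : ℕ) ≠ 2 := by
  let i : Fin n := ⟨0, by omega⟩
  obtain ⟨j, hj⟩ := exists_ladderWeight_ne_two (hS.isDominating_preimage hn i)
    (hS.isIrredundant_preimage hn i)
  exact ⟨(finRotate n ^ j) i, ladderWeight_preimage_snarkCover S i j ▸ hj⟩

end Snark

theorem flowerSnark_minimalDominating_w1_ge_w3_general (n : ℕ) (hn : 3 ≤ n)
    (S : Set (FV n)) (hS : MinimalDominating n S) :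
    {i : Fin n | copyWeight S (i : ℕ) = 3}.ncard ≤
      {i : Fin n | copyWeight S (i : ℕ) = 1}.ncard ∧
    ({i : Fin n | copyWeight S (i : ℕ) = 1}.ncard =
        {i : Fin n | copyWeight S (i : ℕ) = 3}.ncard ↔
      2 * {i : Fin n | copyWeight S (i : ℕ) = 1}.ncard = n ∧
      2 * {i : Fin n | copyWeight S (i : ℕ) = 3}.ncard = n) := by
  set A := {i : Fin n | copyWeight S (i : ℕ) = 3} with hA
  set B := {i : Fin n | copyWeight S (i : ℕ) = 1} with hB
  have hAB : ∀ i ∈ A, finRotate n i ∈ B := fun i => copyWeight_finRotate_eq_one hn hS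
  have hBA : ∀ i, finRotate n i ∈ A → i ∈ B := fun i => copyWeight_eq_one_of_finRotate hn hS
  have hdisj : Disjoint A B := Set.disjoint_left.2 fun i (hi : _ = 3) (hi' : _ = 1) => by omega
  have hne : (A ∪ B).Nonempty := by
    obtain ⟨i, hi⟩ := exists_copyWeight_ne_two hn hS
    obtain ⟨h1, h3⟩ := copyWeight_mem_Icc hn hS i
    exact ⟨i, by simp only [hA, hB, Set.mem_union, Set.mem_ofPred_eq]; omega⟩
  refine ⟨Set.ncard_le_ncard_of_injOn _ hAB (finRotate n).injective.injOn, fun heq => ?_, by omega⟩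
  have huniv : A ∪ B = Set.univ :=
    union_eq_univ_of_isCycleOn (isCycleOn_finRotate n) hAB hBA heq.le hne
  have hsum : A.ncard + B.ncard = n := by
    rw [← Set.ncard_union_eq hdisj, huniv, Set.ncard_univ, Nat.card_fin]
  omega

/-- If `n ≥ 4` and `S` is a minimal dominating set of the flower snark `J_n`,
and `w₁` (resp. `w₃`) is the number of copies with weight 1 (resp. 3) in `S`,
then `w₁ ≥ w₃`, with equality if and only if `w₁ = w₃ = n/2`. -/
theorem flowerSnark_minimalDominating_w1_ge_w3 (n : ℕ) (hn : 4 ≤ n)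
    (S : Set (FV n)) (hS : MinimalDominating n S) :
    {i : Fin n | copyWeight S (i : ℕ) = 3}.ncard ≤
      {i : Fin n | copyWeight S (i : ℕ) = 1}.ncard ∧
    ({i : Fin n | copyWeight S (i : ℕ) = 1}.ncard =
        {i : Fin n | copyWeight S (i : ℕ) = 3}.ncard ↔
      2 * {i : Fin n | copyWeight S (i : ℕ) = 1}.ncard = n ∧
      2 * {i : Fin n | copyWeight S (i : ℕ) = 3}.ncard = n) :=
  flowerSnark_minimalDominating_w1_ge_w3_general n (by omega) S hS
end

section
/- Let n ≥ 3 and let S be a 2-dominating set of the flower snark J_n. If a copy J^i has weight 1 in S, then a^i ∈ S. -/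
theorem flowerSnark_adj_a_iff {n : ℕ} {i : Fin n} {w : FV n} :
    (flowerSnark n).Adj (i, 0) w ↔ w.1 = i ∧ w.2 ≠ 0 := by
  obtain ⟨j, x⟩ := w
  simp only [flowerSnark, SimpleGraph.fromRel_adj]
  grind

theorem copyWeight_eq_ncard_inter_fst_eq {n : ℕ} (S : Set (FV n)) (i : Fin n) :
    copyWeight S i = (S ∩ {v | v.1 = i}).ncard := by
  simp only [copyWeight, Nat.mod_eq_of_lt i.isLt, Fin.val_inj]

namespace TwoDominating

variable {n : ℕ} {S : Set (FV n)}

theorem two_le_ncard_inter_neighborSet (hS : TwoDominating n S) {v : FV n} (hv : v ∉ S) :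
    2 ≤ (S ∩ (flowerSnark n).neighborSet v).ncard := by
  obtain ⟨w₁, hw₁, w₂, hw₂, hne, hadj₁, hadj₂⟩ := hS v hv
  exact Set.one_lt_ncard_iff_nontrivial.mpr ⟨w₁, ⟨hw₁, hadj₁⟩, w₂, ⟨hw₂, hadj₂⟩, hne⟩

theorem two_le_copyWeight_of_a_notMem (hS : TwoDominating n S) {i : Fin n} (ha : (i, 0) ∉ S) :
    2 ≤ copyWeight S i := by
  have neighborSet_subset_copy : (flowerSnark n).neighborSet (i, 0) ⊆ {v | v.1 = i} :=
    fun _ hw ↦ (flowerSnark_adj_a_iff.mp hw).1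
  calc
    2 ≤ (S ∩ (flowerSnark n).neighborSet (i, 0)).ncard := hS.two_le_ncard_inter_neighborSet ha
    _ ≤ (S ∩ {v | v.1 = i}).ncard :=
      Set.ncard_le_ncard (Set.inter_subset_inter_right S neighborSet_subset_copy)
    _ = copyWeight S i := (copyWeight_eq_ncard_inter_fst_eq S i).symm

end TwoDominating

/-- If `n ≥ 3`, `S` is a 2-dominating set of the flower snark `J_n`, and a copy
`J^i` has weight 1 in `S`, then `a^i ∈ S`. -/
theorem flowerSnark_twoDominating_weight1 (n : ℕ) (hn : 3 ≤ n)
    (S : Set (FV n)) (hS : TwoDominating n S)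
    (i : Fin n) (h1 : copyWeight S (i : ℕ) = 1) :
    (i, (0 : Fin 4)) ∈ S := by
  by_contra ha
  have two_le_weight : 2 ≤ copyWeight S i := hS.two_le_copyWeight_of_a_notMem ha
  omega
end

section
/- Let n ≥ 3 and let S be a 2-dominating set of the flower snark J_n. Then every copy J^i that has weight 1 in S has a neighbouring copy (J^{i−1} or J^{i+1}, indices mod n) whose weight in S is 3 or 4. -/
/-!
A 2-dominating set contains every vertex with at most one neighbour in it. If copy `i` has weight
`1`, its only vertex in `S` is therefore the centre: otherwise the centre would need two neighbours
in `S`, all of them in copy `i`. Each of the three leaves of copy `i` then needs a neighbour in `S`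
outside copy `i`, and different leaves have different neighbours in each adjacent copy, so one of
the two adjacent copies has at least two leaves in `S`. If its centre lies in `S`, its weight is at
least `3`. If not, each of its leaves has two neighbours outside `S`, namely that centre and a leaf
of copy `i`, so all three of its leaves lie in `S`.
-/

namespace flowerSnark

/-- The action on labels of the edges from copy `i` to copy `i + 1`: for `k ≠ 0`, the vertex
`(i, k)` is joined to `(i + 1, twist i k)`. It is the identity except for the last copy, where it
exchanges `c` and `d`. -/
def twist {n : ℕ} (i : Fin n) : Equiv.Perm (Fin 4) :=
  if (i : ℕ) + 1 = n then Equiv.swap 2 3 else 1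

/-- The labels of the leaves `b`, `c`, `d` of copy `i` that lie in `S`; the label `0` of the
centre `a` is left out. -/
def leafLabels {n : ℕ} (S : Set (FV n)) (i : Fin n) : Set (Fin 4) :=
  {k | k ≠ 0 ∧ (i, k) ∈ S}

variable {n : ℕ} {i : Fin n} {k : Fin 4} {w : FV n}

theorem twist_zero (i : Fin n) : twist i 0 = 0 := by
  unfold twist
  split_ifs <;> rfl

theorem twist_twist (i : Fin n) (k : Fin 4) : twist i (twist i k) = k := by
  unfold twist
  split_ifs
  · exact Equiv.swap_apply_self ..
  · rfl

theorem twist_ne_zero (hk : k ≠ 0) : twist i k ≠ 0 :=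
  fun h => hk <| (twist i).injective (h.trans (twist_zero i).symm)

theorem fst_eq_of_adj_center (h : (flowerSnark n).Adj (i, 0) w) : w.1 = i := by
  simp only [flowerSnark, SimpleGraph.fromRel_adj] at h
  grind

section Adjacency

variable [NeZero n]

theorem val_add_one_eq_mod (i : Fin n) : ((i + 1 : Fin n) : ℕ) = ((i : ℕ) + 1) % n := by
  rw [Fin.val_add, Fin.val_one', Nat.add_mod_mod]

theorem val_add_one_eq_ite (i : Fin n) :
    ((i + 1 : Fin n) : ℕ) = if (i : ℕ) + 1 = n then 0 else (i : ℕ) + 1 := by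
  rw [val_add_one_eq_mod]
  split_ifs with h
  · rw [h, Nat.mod_self]
  · exact Nat.mod_eq_of_lt (by omega)

theorem eq_fromRel :
    flowerSnark n = SimpleGraph.fromRel fun v w =>
      (v.1 = w.1 ∧ v.2 = 0 ∧ w.2 ≠ 0) ∨ (v.2 ≠ 0 ∧ w = (v.1 + 1, twist v.1 v.2)) := by
  unfold flowerSnark
  congr! 4 with ⟨i, k⟩ ⟨j, l⟩
  have last_iff : (i : ℕ) = n - 1 ↔ (i : ℕ) + 1 = n := by omega
  simp only [Prod.mk.injEq, ← val_add_one_eq_mod, val_add_one_eq_ite, last_iff,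
    Fin.ext_iff (a := j), twist]
  split_ifs with hlast
  · have not_next : (j : ℕ) ≠ (i : ℕ) + 1 := by omega
    grind
  · grind [Equiv.Perm.one_apply]

theorem eq_of_adj_leaf (hk : k ≠ 0) (h : (flowerSnark n).Adj (i, k) w) :
    w = (i, 0) ∨ w = (i + 1, twist i k) ∨ w = (i - 1, twist (i - 1) k) := by
  rw [eq_fromRel, SimpleGraph.fromRel_adj] at h
  obtain ⟨j, l⟩ := w
  rcases h.2 with (⟨-, hk₀, -⟩ | ⟨-, hw⟩) | (⟨rfl, rfl, -⟩ | ⟨-, hv⟩)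
  · exact absurd hk₀ hk
  · exact .inr (.inl hw)
  · exact .inl rfl
  · obtain ⟨rfl, rfl⟩ := Prod.mk.inj hv
    simp [twist_twist]

end Adjacency

section Weight

variable {S : Set (FV n)}

theorem copyWeight_eq_ncard {m : ℕ} (hm : m % n = i) :
    copyWeight S m = (Prod.mk i ⁻¹' S).ncard := by
  suffices S ∩ {v | (v.1 : ℕ) = m % n} = Prod.mk i '' (Prod.mk i ⁻¹' S) by
    rw [copyWeight, this, Set.ncard_image_of_injective _ (Prod.mk_right_injective i)]
  ext ⟨j, k⟩
  simp only [hm, Fin.val_inj, Set.mem_inter_iff, Set.mem_ofPred_eq,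
    Set.image_preimage_eq_inter_range, Set.mem_range, Prod.mk.injEq, exists_eq_right', eq_comm]

theorem copyWeight_val_eq_ncard (i : Fin n) : copyWeight S i = (Prod.mk i ⁻¹' S).ncard :=
  copyWeight_eq_ncard (Nat.mod_eq_of_lt i.is_lt)

theorem copyWeight_eq_of_mod_eq {m : ℕ} (hm : m % n = i) : copyWeight S m = copyWeight S i :=
  (copyWeight_eq_ncard hm).trans (copyWeight_val_eq_ncard i).symm

theorem copyWeight_add_one [NeZero n] (i : Fin n) :
    copyWeight S ((i : ℕ) + 1) = copyWeight S (i + 1 : Fin n) :=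
  copyWeight_eq_of_mod_eq (val_add_one_eq_mod i).symm

theorem copyWeight_add_sub_one [NeZero n] (i : Fin n) :
    copyWeight S ((i : ℕ) + n - 1) = copyWeight S (i - 1 : Fin n) := by
  obtain ⟨j, rfl⟩ : ∃ j, i = j + 1 := ⟨i - 1, (sub_add_cancel i 1).symm⟩
  rw [add_sub_cancel_right]
  refine copyWeight_eq_of_mod_eq ?_
  rw [val_add_one_eq_ite]
  split_ifs
  · rw [Nat.mod_eq_of_lt (by omega)]
    omega
  · rw [Nat.add_right_comm, Nat.add_sub_cancel, Nat.add_mod_right, Nat.mod_eq_of_lt j.is_lt]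

theorem copyWeight_le_four (S : Set (FV n)) (i : Fin n) : copyWeight S i ≤ 4 := by
  rw [copyWeight_val_eq_ncard]
  exact (Set.ncard_le_card _).trans_eq (Nat.card_fin 4)

theorem ncard_leafLabels_le_copyWeight (i : Fin n) : (leafLabels S i).ncard ≤ copyWeight S i := by
  rw [copyWeight_val_eq_ncard]
  exact Set.ncard_le_ncard fun _ hk => hk.2

theorem copyWeight_of_center_mem (h : (i, 0) ∈ S) :
    copyWeight S i = (leafLabels S i).ncard + 1 := by
  have hdiff : Prod.mk i ⁻¹' S \ {0} = leafLabels S i := Set.ext fun _ => and_comm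
  rw [copyWeight_val_eq_ncard, ← Set.ncard_sdiff_singleton_add_one (a := 0) h, hdiff]

theorem ncard_compl_singleton_zero : ({0}ᶜ : Set (Fin 4)).ncard = 3 := by
  rw [Set.ncard_compl, Set.ncard_singleton, Nat.card_fin]

end Weight

end flowerSnark

open flowerSnark

namespace TwoDominating

variable {n : ℕ} {S : Set (FV n)} {i : Fin n}

theorem mem_of_forall_adj_eq (hS : TwoDominating n S) {v x : FV n}
    (h : ∀ w, (flowerSnark n).Adj v w → w ∈ S → w = x) : v ∈ S := by
  by_contra hv
  obtain ⟨w₁, hw₁, w₂, hw₂, hne, hadj₁, hadj₂⟩ := hS v hv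
  exact hne ((h w₁ hadj₁ hw₁).trans (h w₂ hadj₂ hw₂).symm)

theorem center_mem_of_copyWeight_le_one (hS : TwoDominating n S) (hi : copyWeight S i ≤ 1) :
    (i, 0) ∈ S := by
  by_contra hcenter
  obtain ⟨⟨j, k⟩, hk, ⟨j', l⟩, hl, hne, hadj, hadj'⟩ := hS _ hcenter
  obtain rfl : j = i := fst_eq_of_adj_center hadj
  obtain rfl : j' = j := fst_eq_of_adj_center hadj'
  rw [copyWeight_val_eq_ncard, Set.ncard_le_one] at hi
  exact hne (congrArg _ (hi k hk l hl))

theorem leafLabels_eq_empty_of_copyWeight_le_one (hS : TwoDominating n S)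
    (hi : copyWeight S i ≤ 1) : leafLabels S i = ∅ := by
  rw [copyWeight_of_center_mem (hS.center_mem_of_copyWeight_le_one hi)] at hi
  exact (Set.ncard_eq_zero (Set.toFinite _)).mp (by omega)

variable [NeZero n]

theorem leaf_mem_add_one_or_sub_one (hS : TwoDominating n S) {k : Fin 4} (hk : k ≠ 0)
    (hi : (i, k) ∉ S) : (i + 1, twist i k) ∈ S ∨ (i - 1, twist (i - 1) k) ∈ S := by
  by_contra! hout
  refine hi (hS.mem_of_forall_adj_eq (x := (i, 0)) fun w hadj hw => ?_)
  rcases eq_of_adj_leaf hk hadj with hcenter | rfl | rfl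
  · exact hcenter
  · exact absurd hw hout.1
  · exact absurd hw hout.2

theorem three_le_ncard_leafLabels_add (hS : TwoDominating n S) (hi : leafLabels S i = ∅) :
    3 ≤ (leafLabels S (i + 1)).ncard + (leafLabels S (i - 1)).ncard := by
  have hcover : ({0}ᶜ : Set (Fin 4)) ⊆
      twist i ⁻¹' leafLabels S (i + 1) ∪ twist (i - 1) ⁻¹' leafLabels S (i - 1) := fun k hk =>
    (hS.leaf_mem_add_one_or_sub_one hk fun h => hi.subset ⟨hk, h⟩).imp
      (⟨twist_ne_zero hk, ·⟩) (⟨twist_ne_zero hk, ·⟩)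
  have hncard (σ : Equiv.Perm (Fin 4)) (T : Set (Fin 4)) : (σ ⁻¹' T).ncard = T.ncard :=
    Set.ncard_preimage_of_injective_subset_range σ.injective (by simp [σ.surjective.range_eq])
  calc 3 = ({0}ᶜ : Set (Fin 4)).ncard := ncard_compl_singleton_zero.symm
    _ ≤ (twist i ⁻¹' leafLabels S (i + 1) ∪ twist (i - 1) ⁻¹' leafLabels S (i - 1)).ncard :=
      Set.ncard_le_ncard hcover
    _ ≤ (twist i ⁻¹' leafLabels S (i + 1)).ncard +
        (twist (i - 1) ⁻¹' leafLabels S (i - 1)).ncard := Set.ncard_union_le _ _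
    _ = (leafLabels S (i + 1)).ncard + (leafLabels S (i - 1)).ncard := by rw [hncard, hncard]

theorem leafLabels_eq_compl (hS : TwoDominating n S) (hi : (i, 0) ∉ S)
    (hleafless : leafLabels S (i + 1) = ∅ ∨ leafLabels S (i - 1) = ∅) :
    leafLabels S i = {0}ᶜ := by
  refine Set.Subset.antisymm (fun _ hk => hk.1) fun k hk => ⟨hk, ?_⟩
  rcases hleafless with hnext | hprev
  · refine hS.mem_of_forall_adj_eq (x := (i - 1, twist (i - 1) k)) fun w hadj hw => ?_
    rcases eq_of_adj_leaf hk hadj with rfl | rfl | hw_prev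
    · exact absurd hw hi
    · exact (hnext.subset ⟨twist_ne_zero hk, hw⟩).elim
    · exact hw_prev
  · refine hS.mem_of_forall_adj_eq (x := (i + 1, twist i k)) fun w hadj hw => ?_
    rcases eq_of_adj_leaf hk hadj with rfl | hw_next | rfl
    · exact absurd hw hi
    · exact hw_next
    · exact (hprev.subset ⟨twist_ne_zero hk, hw⟩).elim

theorem three_le_copyWeight (hS : TwoDominating n S)
    (hleafless : leafLabels S (i + 1) = ∅ ∨ leafLabels S (i - 1) = ∅)
    (htwo : 2 ≤ (leafLabels S i).ncard) : 3 ≤ copyWeight S i := by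
  by_cases hi : (i, 0) ∈ S
  · rw [copyWeight_of_center_mem hi]
    omega
  · rw [← ncard_compl_singleton_zero, ← hS.leafLabels_eq_compl hi hleafless]
    exact ncard_leafLabels_le_copyWeight i

end TwoDominating

/-- If `n ≥ 3` and `S` is a 2-dominating set of the flower snark `J_n`, then
every copy of weight 1 in `S` has a neighbouring copy (indices mod `n`) whose
weight in `S` is 3 or 4. -/
theorem flowerSnark_twoDominating_weight1_neighbour (n : ℕ) (hn : 3 ≤ n)
    (S : Set (FV n)) (hS : TwoDominating n S)
    (i : Fin n) (h1 : copyWeight S (i : ℕ) = 1) :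
    (copyWeight S ((i : ℕ) + n - 1) = 3 ∨ copyWeight S ((i : ℕ) + n - 1) = 4) ∨
    (copyWeight S ((i : ℕ) + 1) = 3 ∨ copyWeight S ((i : ℕ) + 1) = 4) := by
  have : NeZero n := ⟨by omega⟩
  rw [copyWeight_add_sub_one, copyWeight_add_one]
  have hprev_le := copyWeight_le_four S (i - 1)
  have hnext_le := copyWeight_le_four S (i + 1)
  have hi : leafLabels S i = ∅ := hS.leafLabels_eq_empty_of_copyWeight_le_one h1.le
  have hsum := hS.three_le_ncard_leafLabels_add hi
  obtain hprev | hnext : 2 ≤ (leafLabels S (i - 1)).ncard ∨ 2 ≤ (leafLabels S (i + 1)).ncard := by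
    omega
  · have := hS.three_le_copyWeight (.inl <| by rwa [sub_add_cancel]) hprev
    omega
  · have := hS.three_le_copyWeight (.inr <| by rwa [add_sub_cancel_right]) hnext
    omega
end
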